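/- arXiv:2109.01687 — 5 statements merged into one kernel-verified Lean document; each statement's English description precedes it below -/
import Mathlib

section
/- In PSL(2,ℤ[i]), the principal congruence subgroup Γ(2+2i) is equal to the commutator subgroup of the principal congruence subgroup Γ(1+i). -/
/-- `SL(2, ℤ[i])`: 2×2 matrices over the Gaussian integers of determinant 1. -/
abbrev SL2Zi := Matrix.SpecialLinearGroup (Fin 2) GaussianInt

instance : Fact (Even (Fintype.card (Fin 2))) := ⟨by decide⟩

/-- The subgroup `{±I}` of `SL(2, ℤ[i])`. -/
def PM : Subgroup SL2Zi := Subgroup.zpowers (-1)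

instance : PM.Normal := by
  constructor
  intro x hx g
  obtain ⟨k, rfl⟩ := Subgroup.mem_zpowers_iff.mp hx
  have hc : Commute g ((-1 : SL2Zi) ^ k) := (Commute.neg_one_right g).zpow_right k
  have h : g * (-1 : SL2Zi) ^ k * g⁻¹ = (-1 : SL2Zi) ^ k := by
    rw [hc.eq, mul_assoc, mul_inv_cancel, mul_one]
  rw [h]
  exact Subgroup.mem_zpowers_iff.mpr ⟨k, rfl⟩

/-- `PSL(2, ℤ[i]) = SL(2, ℤ[i]) / {±I}`. -/
abbrev PSL2Zi := SL2Zi ⧸ PM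

/-- The entrywise reduction homomorphism `SL(2, ℤ[i]) → SL(2, ℤ[i]/(β))`. -/
def redMap (β : GaussianInt) :
    SL2Zi →* Matrix.SpecialLinearGroup (Fin 2) (GaussianInt ⧸ Ideal.span {β}) :=
  Matrix.SpecialLinearGroup.map (Ideal.Quotient.mk (Ideal.span {β}))

/-- The principal congruence subgroup `Γ(β)` of `PSL(2, ℤ[i])`: the image in `PSL(2, ℤ[i])`
of the kernel of the reduction map modulo `β`. -/
def Gamma (β : GaussianInt) : Subgroup PSL2Zi :=
  ((redMap β).ker).map (QuotientGroup.mk' PM)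

/-!
Put `ϖ = 1 + i`, so that `ϖ ^ 3` is an associate of `2 + 2i`. The matrices congruent to `1` modulo
`ϖ` are the `1 + ϖ X`, and having determinant `1` forces `ϖ ∣ tr X`. Since `sl₂` is nilpotent in
characteristic two, two such `X` have a commutator that is scalar modulo `ϖ`; the residue field
having only two elements, two such matrices commute up to sign modulo `ϖ ^ 3`.

Conversely, Euclidean division by multiples of `ϖ` shows that these matrices are generated by
the upper and lower transvections with coefficients in `(ϖ)` and the diagonal matrices, so that
modulo commutators each of them has the form `U x * L y * diag(u, u⁻¹)`. If such a product is `±1`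
modulo `2 + 2i`, then `u = ±1` and `2 + 2i` divides `x` and `y`. As `diag(i, -i)` conjugates each
transvection to its inverse and `2 + 2i = 2 ϖ`, both `U x` and `L y` are then commutators.
-/

open Matrix.SpecialLinearGroup
open scoped MatrixGroups commutatorElement

local notation "U" => transvection (zero_ne_one' (Fin 2))
local notation "L" => transvection (one_ne_zero' (Fin 2))
local notation "ϖ" => (⟨1, 1⟩ : GaussianInt)

section CommutatorModCube

variable {R : Type*} [CommRing R]

lemma exists_mul_sub_mul_eq_smul_one_add_smul {d : R} (h2 : d ∣ 2)
    {X Y : Matrix (Fin 2) (Fin 2) R} (hX : d ∣ X.trace) (hY : d ∣ Y.trace) :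
    ∃ (c : R) (Z : Matrix (Fin 2) (Fin 2) R), X * Y - Y * X = c • 1 + d • Z := by
  obtain ⟨e, he⟩ := h2
  obtain ⟨s, hs⟩ := hX
  obtain ⟨t, ht⟩ := hY
  rw [Matrix.trace_fin_two] at hs ht
  have hX' : X 0 0 - X 1 1 = d * (s - e * X 1 1) := by linear_combination hs - X 1 1 * he
  have hY' : Y 0 0 - Y 1 1 = d * (t - e * Y 1 1) := by linear_combination ht - Y 1 1 * he
  refine ⟨X 0 1 * Y 1 0 - X 1 0 * Y 0 1,
    !![0, (s - e * X 1 1) * Y 0 1 - (t - e * Y 1 1) * X 0 1;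
      (t - e * Y 1 1) * X 1 0 - (s - e * X 1 1) * Y 1 0,
      -(e * (X 0 1 * Y 1 0 - X 1 0 * Y 0 1))], ?_⟩
  ext i j
  fin_cases i <;> fin_cases j <;>
    simp only [Fin.zero_eta, Fin.mk_one, Matrix.sub_apply, Matrix.mul_apply, Fin.sum_univ_two,
      Matrix.add_apply, Matrix.smul_apply, Matrix.one_apply_eq, ne_eq, zero_ne_one, one_ne_zero,
      not_false_eq_true, Matrix.one_apply_ne, Matrix.of_apply, Matrix.cons_val',
      Matrix.cons_val_zero, Matrix.cons_val_one, Matrix.cons_val_fin_one, smul_eq_mul, mul_zero,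
      mul_one, add_zero]
  · ring
  · linear_combination Y 0 1 * hX' - X 0 1 * hY'
  · linear_combination X 1 0 * hY' - Y 1 0 * hX'
  · linear_combination -(X 0 1 * Y 1 0 - X 1 0 * Y 0 1) * he

lemma dvd_trace_of_det_one_add_smul_eq_one {d : R} (hd : IsLeftRegular d)
    {X : Matrix (Fin 2) (Fin 2) R} (hX : (1 + d • X).det = 1) : d ∣ X.trace := by
  refine ⟨-X.det, hd ?_⟩
  simp only [Matrix.det_fin_two, Matrix.trace_fin_two, Matrix.add_apply, Matrix.smul_apply,
    Matrix.one_apply_eq, ne_eq, zero_ne_one, one_ne_zero, not_false_eq_true, Matrix.one_apply_ne,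
    zero_add, smul_eq_mul] at hX ⊢
  linear_combination hX

lemma mul_eq_mul_or_neg_mul_add_pow_three_smul {p v : R} (hp : IsLeftRegular p)
    (h2 : 2 = p ^ 2 * v) (hv : p ∣ v - 1) (hres : ∀ z, p ∣ z ∨ p ∣ z - 1)
    {A B X Y : Matrix (Fin 2) (Fin 2) R} (hA : A = 1 + p • X) (hB : B = 1 + p • Y)
    (hdetA : A.det = 1) (hdetB : B.det = 1) :
    ∃ W : Matrix (Fin 2) (Fin 2) R, A * B = B * A + p ^ 3 • W ∨ A * B = -(B * A) + p ^ 3 • W := by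
  have hp2 : p ∣ 2 := ⟨p * v, by rw [h2]; ring⟩
  obtain ⟨c, Z, hZ⟩ := exists_mul_sub_mul_eq_smul_one_add_smul hp2
    (dvd_trace_of_det_one_add_smul_eq_one hp (hA ▸ hdetA))
    (dvd_trace_of_det_one_add_smul_eq_one hp (hB ▸ hdetB))
  have hcomm : A * B - B * A = p ^ 2 • (c • 1 + p • Z) := by
    rw [← hZ, hA, hB]
    simp only [mul_add, add_mul, mul_one, one_mul, smul_mul_assoc, mul_smul_comm]
    module
  rcases hres c with ⟨t, rfl⟩ | ⟨t, ht⟩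
  · refine ⟨t • 1 + Z, Or.inl ?_⟩
    rw [← sub_eq_iff_eq_add', hcomm]
    module
  · -- Here `A * B - B * A ≡ p ^ 2 ≡ 2 ≡ -2 * (B * A)` modulo `p ^ 3`.
    obtain ⟨w, hw⟩ := hv
    have hBA : B * A = 1 + p • (X + Y + p • (Y * X)) := by
      rw [hA, hB]
      simp only [mul_add, add_mul, mul_one, one_mul, smul_mul_assoc, mul_smul_comm]
      module
    have h2BA : (2 : R) • (B * A) = (p ^ 2 * v) • (1 + p • (X + Y + p • (Y * X))) := by
      rw [h2, hBA]
    have hcv : c + v = p * (p * v + w + t) := by linear_combination ht + hw + h2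
    refine ⟨(p * v + w + t) • 1 + Z + v • (X + Y + p • (Y * X)), Or.inr ?_⟩
    calc A * B = -(B * A) + (A * B - B * A + (2 : R) • (B * A)) := by module
      _ = -(B * A) + (p ^ 2 • (c + v) • 1 + p ^ 3 • (Z + v • (X + Y + p • (Y * X)))) := by
        rw [hcomm, h2BA]; module
      _ = _ := by rw [hcv]; module

end CommutatorModCube

section CommutatorNormalForm

variable {G : Type*} [Group G] {A B C H K : Subgroup G}

lemma le_normalizer_of_commutator_le (hHK : H ≤ K) (hK : ⁅K, K⁆ ≤ H) :
    K ≤ Subgroup.normalizer (H : Set G) :=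
  Subgroup.le_normalizer_iff_commutator_le_right.2 <|
    (Subgroup.commutator_mono le_rfl hHK).trans hK

lemma mem_sup_iff_of_commutator_le (hA : A ≤ K) (hHK : H ≤ K) (hK : ⁅K, K⁆ ≤ H) {g : G} :
    g ∈ A ⊔ H ↔ ∃ a ∈ A, ∃ h ∈ H, a * h = g := by
  rw [← SetLike.mem_coe, Subgroup.coe_mul_of_left_le_normalizer_right A H
    (hA.trans (le_normalizer_of_commutator_le hHK hK)), Set.mem_mul]
  rfl

lemma exists_mul_mul_mul_mem_commutator (hA : A ≤ K) (hB : B ≤ K) (hC : C ≤ K) {g : G}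
    (hg : g ∈ A ⊔ B ⊔ C) :
    ∃ a ∈ A, ∃ b ∈ B, ∃ c ∈ C, ∃ n ∈ ⁅K, K⁆, a * b * c * n = g := by
  have hKK : ⁅K, K⁆ ≤ K := Subgroup.commutator_le_self K
  have hg' : g ∈ A ⊔ (B ⊔ (C ⊔ ⁅K, K⁆)) := by
    rw [← sup_assoc, ← sup_assoc]
    exact Subgroup.mem_sup_left hg
  obtain ⟨a, ha, _, hBCn, rfl⟩ := (mem_sup_iff_of_commutator_le hA
    (sup_le hB (sup_le hC hKK)) (le_sup_right.trans le_sup_right)).1 hg'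
  obtain ⟨b, hb, _, hCn, rfl⟩ :=
    (mem_sup_iff_of_commutator_le hB (sup_le hC hKK) le_sup_right).1 hBCn
  obtain ⟨c, hc, n, hn, rfl⟩ := (mem_sup_iff_of_commutator_le hC hKK le_rfl).1 hCn
  exact ⟨a, ha, b, hb, c, hc, n, hn, by simp only [mul_assoc]⟩

end CommutatorNormalForm

section PrincipalCongruence

variable {n R : Type*} [Fintype n] [DecidableEq n] [CommRing R]

lemma map_mk_span_singleton_eq_iff (d : R) (g h : Matrix.SpecialLinearGroup n R) :
    map (Ideal.Quotient.mk (Ideal.span {d})) g = map (Ideal.Quotient.mk (Ideal.span {d})) h ↔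
      ∀ i j, d ∣ g i j - h i j := by
  simp_rw [Matrix.SpecialLinearGroup.ext_iff, map_apply_coe, RingHom.mapMatrix_apply,
    Matrix.map_apply, Ideal.Quotient.eq, Ideal.mem_span_singleton]

/-- The root subgroup of `SL(n, R)` at the off-diagonal position `(i, j)` with coefficients in the
ideal `I`. Those with `I = (1 + i)` provide the unipotent generators of the kernel of reduction
modulo `1 + i`. -/
def transvectionSubgroup {i j : n} (hij : i ≠ j) (I : Ideal R) :
    Subgroup (Matrix.SpecialLinearGroup n R) where
  carrier := {g | ∃ x ∈ I, transvection hij x = g}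
  one_mem' := ⟨0, I.zero_mem, transvection_coeff_zero hij⟩
  mul_mem' := by
    rintro _ _ ⟨x, hx, rfl⟩ ⟨y, hy, rfl⟩
    exact ⟨x + y, I.add_mem hx hy, transvection_add hij x y⟩
  inv_mem' := by
    rintro _ ⟨x, hx, rfl⟩
    exact ⟨-x, I.neg_mem hx, (transvection_inv hij x).symm⟩

end PrincipalCongruence

local notation "𝒰" => transvectionSubgroup (zero_ne_one' (Fin 2))
local notation "𝓛" => transvectionSubgroup (one_ne_zero' (Fin 2))

section SL2

variable {R : Type*} [CommRing R]

/-- The diagonal torus of `SL(2, R)`, parametrised by the upper left entry; it provides the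
diagonal generators of the kernel of reduction modulo `1 + i`. -/
def torus : Rˣ →* SL(2, R) where
  toFun u := ⟨!![(u : R), 0; 0, ↑u⁻¹], by simp [Matrix.det_fin_two]⟩
  map_one' := Subtype.ext <| by simp [Matrix.one_fin_two]
  map_mul' u v := Subtype.ext <| by
    change _ = !![(u : R), 0; 0, ↑u⁻¹] * !![(v : R), 0; 0, ↑v⁻¹]
    simp [mul_comm]

lemma coe_torus (u : Rˣ) : (torus u : Matrix (Fin 2) (Fin 2) R) = !![(u : R), 0; 0, ↑u⁻¹] := rfl

lemma coe_transvection_zero_one (x : R) : (U x : Matrix (Fin 2) (Fin 2) R) = !![1, x; 0, 1] := by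
  ext i j; fin_cases i <;> fin_cases j <;> simp [transvection_coe]

lemma coe_transvection_one_zero (x : R) : (L x : Matrix (Fin 2) (Fin 2) R) = !![1, 0; x, 1] := by
  ext i j; fin_cases i <;> fin_cases j <;> simp [transvection_coe]

lemma coe_transvection_mul_transvection_mul_torus (x y : R) (u : Rˣ) :
    (U x * L y * torus u : Matrix (Fin 2) (Fin 2) R) =
      !![(1 + x * y) * u, x * ↑u⁻¹; y * u, ↑u⁻¹] := by
  simp [coe_torus, coe_transvection_zero_one, coe_transvection_one_zero]

lemma torus_neg (u : Rˣ) : torus (-u) = -torus u :=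
  Subtype.ext <| by simp [coe_torus]

lemma torus_mul_transvection_zero_one (u : Rˣ) (x : R) :
    torus u * U x = U ((u : R) ^ 2 * x) * torus u := by
  apply Subtype.ext
  simp [coe_torus, coe_transvection_zero_one, pow_two, mul_right_comm]

lemma torus_mul_transvection_one_zero (u : Rˣ) (x : R) :
    torus u * L x = L ((↑u⁻¹ : R) ^ 2 * x) * torus u := by
  apply Subtype.ext
  simp [coe_torus, coe_transvection_one_zero, pow_two, mul_right_comm]

lemma commutator_torus_transvection_zero_one (u : Rˣ) (x : R) :
    ⁅torus u, U x⁆ = U (((u : R) ^ 2 - 1) * x) := by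
  rw [commutatorElement_def, torus_mul_transvection_zero_one, mul_inv_cancel_right,
    transvection_inv, ← transvection_add]
  ring_nf

lemma commutator_torus_transvection_one_zero (u : Rˣ) (x : R) :
    ⁅torus u, L x⁆ = L (((↑u⁻¹ : R) ^ 2 - 1) * x) := by
  rw [commutatorElement_def, torus_mul_transvection_one_zero, mul_inv_cancel_right,
    transvection_inv, ← transvection_add]
  ring_nf

lemma exists_eq_transvection_mul_torus_of_one_zero_eq_zero {g : SL(2, R)} (hg : g 1 0 = 0) :
    ∃ u : Rˣ, g = U (g 0 1 * g 0 0) * torus u := by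
  have hdet : g 0 0 * g 1 1 = 1 := by
    have := g.det_coe
    rwa [Matrix.det_fin_two, hg, mul_zero, sub_zero] at this
  refine ⟨⟨g 0 0, g 1 1, hdet, by rw [mul_comm, hdet]⟩, Subtype.ext ?_⟩
  rw [coe_mul, coe_transvection_zero_one, coe_torus]
  ext i j
  fin_cases i <;> fin_cases j <;> simp [Units.inv_mk, hg, mul_assoc, hdet]

end SL2

section GaussianInteger

open GaussianInt Zsqrtd

lemma one_add_I_dvd_iff {z : GaussianInt} : ϖ ∣ z ↔ Even (z.re + z.im) := by
  constructor
  · rintro ⟨w, rfl⟩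
    exact ⟨w.re, by simp⟩
  · rintro ⟨k, hk⟩
    exact ⟨⟨k, k - z.re⟩, Zsqrtd.ext (by simp) (by simp only [im_mul, one_mul]; lia)⟩

lemma one_add_I_dvd_or_dvd_sub_one (z : GaussianInt) : ϖ ∣ z ∨ ϖ ∣ z - 1 := by
  simp only [one_add_I_dvd_iff, re_sub, im_sub, re_one, im_one]
  grind

lemma one_add_I_dvd_iff_even_norm {z : GaussianInt} : ϖ ∣ z ↔ Even z.norm := by
  rw [one_add_I_dvd_iff, norm_def]
  simp [parity_simps]

lemma one_add_I_dvd_sub_one_of_isUnit {u : GaussianInt} (hu : IsUnit u) : ϖ ∣ u - 1 := by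
  refine (one_add_I_dvd_or_dvd_sub_one u).resolve_left fun h => ?_
  rw [one_add_I_dvd_iff_even_norm, (norm_eq_one_iff' (by lia) u).2 hu] at h
  exact Int.not_even_one h

lemma eq_one_of_isUnit_of_two_add_two_I_dvd_sub_one {u : GaussianInt} (hu : IsUnit u)
    (h : (⟨2, 2⟩ : GaussianInt) ∣ u - 1) : u = 1 := by
  have hnorm : u.re * u.re + u.im * u.im = 1 := by
    simpa [norm_def] using (norm_eq_one_iff' (by lia) u).2 hu
  have hdvd : (8 : ℤ) ∣ (u - 1).norm := by
    obtain ⟨w, hw⟩ := h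
    exact ⟨w.norm, by simp [hw, norm_mul, norm_def]⟩
  have hlt : (u - 1).norm < 8 := by
    simp only [norm_def, re_sub, im_sub, re_one, im_one]
    nlinarith
  rw [← sub_eq_zero, ← GaussianInt.norm_eq_zero]
  exact Int.eq_zero_of_dvd_of_nonneg_of_lt (GaussianInt.norm_nonneg _) hlt hdvd

lemma normSq_div_sub_div_le_half (x y : GaussianInt) :
    Complex.normSq ((x / y : ℂ) - ((x / y : GaussianInt) : ℂ)) ≤ 1 / 2 := by
  have hre := sq_le_sq' (abs_le.1 (abs_sub_round (x / y : ℂ).re)).1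
    (abs_le.1 (abs_sub_round (x / y : ℂ).re)).2
  have him := sq_le_sq' (abs_le.1 (abs_sub_round (x / y : ℂ).im)).1
    (abs_le.1 (abs_sub_round (x / y : ℂ).im)).2
  rw [Complex.normSq_apply, Complex.sub_re, Complex.sub_im, toComplex_re_div, toComplex_im_div]
  linarith

lemma two_mul_norm_mod_le (x : GaussianInt) {y : GaussianInt} (hy : y ≠ 0) :
    2 * (x % y).norm ≤ y.norm := by
  have hy' : (y : ℂ) ≠ 0 := toComplex_eq_zero.not.2 hy
  have hmod : ((x % y).norm : ℝ) =
      y.norm * Complex.normSq ((x / y : ℂ) - ((x / y : GaussianInt) : ℂ)) := by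
    rw [intCast_real_norm, intCast_real_norm, ← Complex.normSq_mul, mul_sub,
      mul_div_cancel₀ _ hy', mod_def, toComplex_sub, toComplex_mul]
  have hnorm : (0 : ℝ) ≤ y.norm := mod_cast GaussianInt.norm_nonneg y
  have := mul_le_mul_of_nonneg_left (normSq_div_sub_div_le_half x y) hnorm
  exact_mod_cast (by linarith : (2 : ℝ) * (x % y).norm ≤ y.norm)

lemma exists_one_add_I_dvd_norm_add_mul_lt {a c : GaussianInt} (hc : c ≠ 0) (hac : ¬ ϖ ∣ a - c) :
    ∃ q, ϖ ∣ q ∧ (a + q * c).norm < c.norm := by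
  have hϖc : ϖ * c ≠ 0 := mul_ne_zero (by decide) hc
  obtain ⟨r, hr⟩ : ∃ r, r = a % (ϖ * c) := ⟨_, rfl⟩
  have hra : r = a + -(ϖ * (a / (ϖ * c))) * c := by
    rw [hr, GaussianInt.mod_def]; ring
  have hle : r.norm ≤ c.norm := by
    have := two_mul_norm_mod_le a hϖc
    rw [← hr, Zsqrtd.norm_mul, show norm ϖ = 2 from rfl] at this
    lia
  -- Equal norms would make `r` and `c`, hence `a` and `c`, congruent modulo `ϖ`, because
  -- divisibility by `ϖ` is detected by the parity of the norm.
  have hne : r.norm ≠ c.norm := fun h => hac <| by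
    have hrc : ϖ ∣ r - c := by
      have : ϖ ∣ r ↔ ϖ ∣ c := by
        rw [one_add_I_dvd_iff_even_norm, h, ← one_add_I_dvd_iff_even_norm]
      simp only [one_add_I_dvd_iff, re_sub, im_sub] at this ⊢
      grind
    rw [show a - c = r - c + ϖ * (a / (ϖ * c)) * c by rw [hra]; ring]
    exact hrc.add ((dvd_mul_right _ _).mul_right _)
  exact ⟨-(ϖ * (a / (ϖ * c))), (dvd_mul_right _ _).neg_right, hra ▸ hle.lt_of_ne hne⟩

end GaussianInteger

section ReductionKernels

lemma redMap_eq_iff {β : GaussianInt} {g h : SL2Zi} :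
    redMap β g = redMap β h ↔ ∀ i j, β ∣ g i j - h i j :=
  map_mk_span_singleton_eq_iff β g h

lemma redMap_eq_of_eq_add_smul {β : GaussianInt} {g h : SL2Zi}
    {X : Matrix (Fin 2) (Fin 2) GaussianInt} (H : g.1 = h.1 + β • X) :
    redMap β g = redMap β h :=
  redMap_eq_iff.2 fun i j => ⟨X i j, by rw [H]; simp⟩

lemma mem_ker_redMap_iff {β : GaussianInt} {g : SL2Zi} :
    g ∈ (redMap β).ker ↔ β ∣ g 0 0 - 1 ∧ β ∣ g 0 1 ∧ β ∣ g 1 0 ∧ β ∣ g 1 1 - 1 := by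
  rw [MonoidHom.mem_ker, ← map_one (redMap β), redMap_eq_iff]
  simp [Fin.forall_fin_two, and_assoc]

lemma exists_coe_eq_one_add_smul {β : GaussianInt} {g : SL2Zi} (hg : g ∈ (redMap β).ker) :
    ∃ X : Matrix (Fin 2) (Fin 2) GaussianInt, g.1 = 1 + β • X := by
  rw [MonoidHom.mem_ker, ← map_one (redMap β), redMap_eq_iff] at hg
  choose X hX using hg
  refine ⟨Matrix.of X, ?_⟩
  ext1 i j
  rw [Matrix.add_apply, Matrix.smul_apply, Matrix.of_apply, smul_eq_mul, ← hX]
  simp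

lemma mem_PM_iff {g : SL2Zi} : g ∈ PM ↔ g = 1 ∨ g = -1 := by
  constructor
  · rintro ⟨k, rfl⟩
    exact (Int.even_or_odd k).imp Even.neg_one_zpow Odd.neg_one_zpow
  · rintro (rfl | rfl)
    exacts [one_mem _, Subgroup.mem_zpowers _]

lemma mem_sup_PM_iff {H : Subgroup SL2Zi} {g : SL2Zi} : g ∈ H ⊔ PM ↔ g ∈ H ∨ -g ∈ H := by
  simp only [Subgroup.mem_sup_of_normal_right, mem_PM_iff]
  constructor
  · rintro ⟨h, hh, _, rfl | rfl, rfl⟩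
    · exact Or.inl (by simpa using hh)
    · exact Or.inr (by simpa using hh)
  · rintro (hg | hg)
    · exact ⟨g, hg, 1, Or.inl rfl, mul_one g⟩
    · exact ⟨-g, hg, -1, Or.inr rfl, by simp⟩

lemma transvectionSubgroup_le_ker_redMap {i j : Fin 2} (hij : i ≠ j) (β : GaussianInt) :
    transvectionSubgroup hij (Ideal.span {β}) ≤ (redMap β).ker := by
  rintro _ ⟨x, hx, rfl⟩
  obtain ⟨t, rfl⟩ := Ideal.mem_span_singleton.1 hx
  rw [MonoidHom.mem_ker, ← map_one (redMap β)]
  refine redMap_eq_of_eq_add_smul (X := Matrix.single i j t) ?_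
  simp [transvection_coe]

lemma torus_mem_ker_redMap {β : GaussianInt} {u : GaussianIntˣ} (hu : β ∣ (u : GaussianInt) - 1) :
    torus u ∈ (redMap β).ker := by
  have hinv : β ∣ (↑u⁻¹ : GaussianInt) - 1 := by
    have : (↑u⁻¹ : GaussianInt) - 1 = -↑u⁻¹ * (↑u - 1) := by
      rw [mul_sub, neg_mul, Units.inv_mul]
      ring
    exact this ▸ hu.mul_left _
  rw [mem_ker_redMap_iff]
  simpa [coe_torus] using ⟨hu, hinv⟩

lemma torus_range_le_ker_redMap_one_add_I : torus.range ≤ (redMap ϖ).ker := by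
  rintro _ ⟨u, rfl⟩
  exact torus_mem_ker_redMap (one_add_I_dvd_sub_one_of_isUnit u.isUnit)

lemma dvd_of_transvection_mul_transvection_mul_torus_mem_ker_redMap {β x y : GaussianInt}
    {u : GaussianIntˣ} (h : U x * L y * torus u ∈ (redMap β).ker) :
    β ∣ x ∧ β ∣ y ∧ β ∣ ((u⁻¹ : GaussianIntˣ) : GaussianInt) - 1 := by
  rw [mem_ker_redMap_iff] at h
  simpa [coe_transvection_mul_transvection_mul_torus] using h.2

lemma ker_redMap_le_ker_redMap {α β : GaussianInt} (h : α ∣ β) :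
    (redMap β).ker ≤ (redMap α).ker := fun g hg => by
  rw [mem_ker_redMap_iff] at hg ⊢
  exact hg.imp h.trans (And.imp h.trans (And.imp h.trans h.trans))

lemma exists_transvection_mul_norm_lt {g : SL2Zi} (hg : g ∈ (redMap ϖ).ker) (hg10 : g 1 0 ≠ 0) :
    ∃ t ∈ 𝒰 (Ideal.span {ϖ}) ⊔ 𝓛 (Ideal.span {ϖ}),
      ((t * g) 0 0).norm + ((t * g) 1 0).norm < (g 0 0).norm + (g 1 0).norm := by
  obtain ⟨h00, -, h10, -⟩ := mem_ker_redMap_iff.1 hg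
  have hϖ : ¬ ϖ ∣ 1 := by simp [one_add_I_dvd_iff]
  have hne : ¬ ϖ ∣ g 0 0 - g 1 0 := fun h => hϖ <| by
    simpa using (h.add h10).sub h00
  have hg00 : g 0 0 ≠ 0 := fun h => hϖ <| by
    simpa [h] using h00
  rcases le_or_gt (g 1 0).norm (g 0 0).norm with hle | hlt
  · obtain ⟨q, hq, hlt⟩ := exists_one_add_I_dvd_norm_add_mul_lt hg10 hne
    refine ⟨U q, Subgroup.mem_sup_left ⟨q, Ideal.mem_span_singleton.2 hq, rfl⟩, ?_⟩
    simpa [coe_transvection_zero_one, Matrix.mul_apply] using hlt.trans_le hle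
  · obtain ⟨q, hq, hlt'⟩ := exists_one_add_I_dvd_norm_add_mul_lt hg00 (by rwa [dvd_sub_comm])
    refine ⟨L q, Subgroup.mem_sup_right ⟨q, Ideal.mem_span_singleton.2 hq, rfl⟩, ?_⟩
    simpa [coe_transvection_one_zero, Matrix.mul_apply, add_comm (g 1 0)] using hlt'.trans hlt

theorem ker_redMap_one_add_I_le_sup :
    (redMap ϖ).ker ≤ 𝒰 (Ideal.span {ϖ}) ⊔ 𝓛 (Ideal.span {ϖ}) ⊔ torus.range := by
  intro g hg
  induction hn : ((g 0 0).norm + (g 1 0).norm).toNat using Nat.strong_induction_on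
    generalizing g with
  | _ n ih =>
    by_cases hg10 : g 1 0 = 0
    · obtain ⟨u, hu⟩ := exists_eq_transvection_mul_torus_of_one_zero_eq_zero hg10
      rw [hu]
      have hdvd : ϖ ∣ g 0 1 * g 0 0 := (mem_ker_redMap_iff.1 hg).2.1.mul_right _
      exact mul_mem
        (Subgroup.mem_sup_left <| Subgroup.mem_sup_left ⟨_, Ideal.mem_span_singleton.2 hdvd, rfl⟩)
        (Subgroup.mem_sup_right ⟨u, rfl⟩)
    · obtain ⟨t, ht, hlt⟩ := exists_transvection_mul_norm_lt hg hg10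
      have htker : t ∈ (redMap ϖ).ker :=
        sup_le (transvectionSubgroup_le_ker_redMap _ _) (transvectionSubgroup_le_ker_redMap _ _) ht
      rw [← Subgroup.mul_mem_cancel_left _ (Subgroup.mem_sup_left ht)]
      have := GaussianInt.norm_nonneg ((t * g) 0 0)
      have := GaussianInt.norm_nonneg ((t * g) 1 0)
      exact ih _ (by lia) (mul_mem htker hg) rfl

theorem commutator_ker_redMap_one_add_I_le :
    ⁅(redMap ϖ).ker, (redMap ϖ).ker⁆ ≤ (redMap ⟨2, 2⟩).ker ⊔ PM := by
  rw [Subgroup.commutator_le]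
  intro A hA B hB
  obtain ⟨X, hX⟩ := exists_coe_eq_one_add_smul hA
  obtain ⟨Y, hY⟩ := exists_coe_eq_one_add_smul hB
  have hcube (W : Matrix (Fin 2) (Fin 2) GaussianInt) :
      ϖ ^ 3 • W = (⟨2, 2⟩ : GaussianInt) • (⟨0, 1⟩ : GaussianInt) • W := by
    rw [smul_smul]; rfl
  obtain ⟨W, hW⟩ := mul_eq_mul_or_neg_mul_add_pow_three_smul (p := ϖ) (v := ⟨0, -1⟩)
    (IsRegular.of_ne_zero (by decide)).left rfl (by simp [one_add_I_dvd_iff])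
    one_add_I_dvd_or_dvd_sub_one hX hY A.2 B.2
  have hcomm : ⁅A, B⁆ = A * B / (B * A) := by
    rw [commutatorElement_def, div_eq_mul_inv, mul_inv_rev, mul_assoc (A * B)]
  rw [hcube] at hW
  rw [mem_sup_PM_iff, hcomm, ← div_neg, MonoidHom.div_mem_ker_iff, MonoidHom.div_mem_ker_iff]
  exact hW.imp (fun h => redMap_eq_of_eq_add_smul h) (fun h => redMap_eq_of_eq_add_smul h)

lemma exists_unit_sq_sub_one_mul_eq_of_two_add_two_I_dvd {x : GaussianInt}
    (hx : (⟨2, 2⟩ : GaussianInt) ∣ x) :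
    ∃ u : GaussianIntˣ, ∃ z, ϖ ∣ z ∧
      ((u : GaussianInt) ^ 2 - 1) * z = x ∧ ((↑u⁻¹ : GaussianInt) ^ 2 - 1) * z = x := by
  obtain ⟨t, rfl⟩ := hx
  refine ⟨⟨⟨0, 1⟩, ⟨0, -1⟩, rfl, rfl⟩, -ϖ * t, (dvd_neg.2 dvd_rfl).mul_right t, ?_, ?_⟩ <;>
  · rw [← mul_assoc]
    congr 1

lemma transvectionSubgroup_zero_one_le_commutator :
    𝒰 (Ideal.span {(⟨2, 2⟩ : GaussianInt)}) ≤ ⁅(redMap ϖ).ker, (redMap ϖ).ker⁆ := by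
  rintro _ ⟨x, hx, rfl⟩
  obtain ⟨u, z, hz, rfl, -⟩ :=
    exists_unit_sq_sub_one_mul_eq_of_two_add_two_I_dvd (Ideal.mem_span_singleton.1 hx)
  rw [← commutator_torus_transvection_zero_one]
  exact Subgroup.commutator_mem_commutator (torus_range_le_ker_redMap_one_add_I ⟨u, rfl⟩)
    (transvectionSubgroup_le_ker_redMap _ _ ⟨z, Ideal.mem_span_singleton.2 hz, rfl⟩)

lemma transvectionSubgroup_one_zero_le_commutator :
    𝓛 (Ideal.span {(⟨2, 2⟩ : GaussianInt)}) ≤ ⁅(redMap ϖ).ker, (redMap ϖ).ker⁆ := by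
  rintro _ ⟨x, hx, rfl⟩
  obtain ⟨u, z, hz, -, rfl⟩ :=
    exists_unit_sq_sub_one_mul_eq_of_two_add_two_I_dvd (Ideal.mem_span_singleton.1 hx)
  rw [← commutator_torus_transvection_one_zero]
  exact Subgroup.commutator_mem_commutator (torus_range_le_ker_redMap_one_add_I ⟨u, rfl⟩)
    (transvectionSubgroup_le_ker_redMap _ _ ⟨z, Ideal.mem_span_singleton.2 hz, rfl⟩)

lemma transvection_mul_transvection_mul_torus_mem_commutator {x y : GaussianInt}
    {u : GaussianIntˣ} (h : U x * L y * torus u ∈ (redMap ⟨2, 2⟩).ker) :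
    U x * L y * torus u ∈ ⁅(redMap ϖ).ker, (redMap ϖ).ker⁆ := by
  obtain ⟨hx, hy, hu⟩ := dvd_of_transvection_mul_transvection_mul_torus_mem_ker_redMap h
  have hu1 : u = 1 := inv_eq_one.1 <| Units.ext <|
    eq_one_of_isUnit_of_two_add_two_I_dvd_sub_one u⁻¹.isUnit hu
  rw [hu1, map_one, mul_one]
  exact mul_mem
    (transvectionSubgroup_zero_one_le_commutator ⟨x, Ideal.mem_span_singleton.2 hx, rfl⟩)
    (transvectionSubgroup_one_zero_le_commutator ⟨y, Ideal.mem_span_singleton.2 hy, rfl⟩)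

theorem ker_redMap_two_add_two_I_le :
    (redMap ⟨2, 2⟩).ker ≤ ⁅(redMap ϖ).ker, (redMap ϖ).ker⁆ ⊔ PM := by
  intro g hg
  obtain ⟨_, ⟨x, -, rfl⟩, _, ⟨y, -, rfl⟩, _, ⟨u, rfl⟩, n, hn, rfl⟩ :=
    exists_mul_mul_mul_mem_commutator (transvectionSubgroup_le_ker_redMap _ _)
      (transvectionSubgroup_le_ker_redMap _ _) torus_range_le_ker_redMap_one_add_I
      (ker_redMap_one_add_I_le_sup (ker_redMap_le_ker_redMap ⟨2, rfl⟩ hg))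
  refine mul_mem ?_ (Subgroup.mem_sup_left hn)
  have hmem : U x * L y * torus u ∈ (redMap ⟨2, 2⟩).ker ⊔ PM := by
    rw [← Subgroup.mul_mem_cancel_right _ (commutator_ker_redMap_one_add_I_le hn)]
    exact Subgroup.mem_sup_left hg
  rw [mem_sup_PM_iff, ← mul_neg, ← torus_neg] at hmem ⊢
  exact hmem.imp transvection_mul_transvection_mul_torus_mem_commutator
    transvection_mul_transvection_mul_torus_mem_commutator

theorem ker_redMap_two_add_two_I_sup_PM :
    (redMap ⟨2, 2⟩).ker ⊔ PM = ⁅(redMap ϖ).ker, (redMap ϖ).ker⁆ ⊔ PM :=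
  le_antisymm (sup_le ker_redMap_two_add_two_I_le le_sup_right)
    (sup_le commutator_ker_redMap_one_add_I_le le_sup_right)

end ReductionKernels

/-- In `PSL(2, ℤ[i])`, the principal congruence subgroup `Γ(2+2i)` equals the commutator
subgroup of the principal congruence subgroup `Γ(1+i)`. -/
theorem Gamma_two_two_eq_commutator_Gamma_one_one :
    Gamma ⟨2, 2⟩ = ⁅Gamma ⟨1, 1⟩, Gamma ⟨1, 1⟩⁆ := by
  unfold Gamma
  rw [← Subgroup.map_commutator, Subgroup.map_eq_map_iff, QuotientGroup.ker_mk']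
  exact ker_redMap_two_add_two_I_sup_PM
end

section
/- The images in PSL(2,ℤ[i]) of the matrices [[1, 2+2i],[0, 1]] and [[1, 4],[0, 1]] both lie in the principal congruence subgroup Γ(1+i), and moreover both lie in the commutator subgroup of Γ(1+i). -/
/-- The matrix `[[1, 2+2i], [0, 1]]` as an element of `SL(2, ℤ[i])`. -/
def u₁ : SL2Zi := ⟨!![1, ⟨2, 2⟩; 0, 1], by simp [Matrix.det_fin_two_of]⟩

/-- The matrix `[[1, 4], [0, 1]]` as an element of `SL(2, ℤ[i])`. -/
def u₂ : SL2Zi := ⟨!![1, 4; 0, 1], by simp [Matrix.det_fin_two_of]⟩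

/-!
Conjugation by the diagonal matrix `diag(u, u⁻¹)` multiplies the off-diagonal entry of
`[[1, b], [0, 1]]` by `u²`, so the commutator of the two matrices is `[[1, (u² - 1) b], [0, 1]]`.
Both matrices are trivial modulo `β` as soon as `β` divides `u - 1` and `b`. For `u = i` and
`β = 1 + i` this gives every entry `-2 b` with `1 + i ∣ b`, that is, every multiple of `2 + 2i`;
and `4 = (2 + 2i)(1 - i)`.
-/

section

open Matrix.SpecialLinearGroup
open scoped commutatorElement

variable {ι R S : Type*} [DecidableEq ι] [Fintype ι] [CommRing R] [CommRing S]

/-- The diagonal matrix with entries `d`, as an element of the special linear group. The entries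
are bundled as units so that the ratios `d i / d j`, by which it scales the `(i, j)` entry of a
matrix under conjugation, can be written down. -/
def diagonalSL (d : ι → Rˣ) (hd : ∏ i, d i = 1) : Matrix.SpecialLinearGroup ι R :=
  ⟨Matrix.diagonal fun i ↦ (d i : R), by
    rw [Matrix.det_diagonal, ← Units.coe_prod, hd, Units.val_one]⟩

lemma coe_diagonalSL {d : ι → Rˣ} (hd : ∏ i, d i = 1) :
    (diagonalSL d hd : Matrix ι ι R) = Matrix.diagonal fun i ↦ (d i : R) :=
  rfl

lemma diagonalSL_mem_ker_map_iff (f : R →+* S) {d : ι → Rˣ} (hd : ∏ i, d i = 1) :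
    diagonalSL d hd ∈ (map f).ker ↔ ∀ i, f (d i) = 1 :=
  Subtype.ext_iff.trans <| by simp [coe_diagonalSL, Matrix.diagonal_map, funext_iff]

lemma transvection_mem_ker_map_iff (f : R →+* S) {i j : ι} (hij : i ≠ j) {b : R} :
    transvection hij b ∈ (map f).ker ↔ f b = 0 :=
  Subtype.ext_iff.trans <| by
    simp [transvection_coe, Matrix.map_add, ← Matrix.ext_iff, Matrix.single_apply]

lemma conj_diagonalSL_transvection {d : ι → Rˣ} (hd : ∏ i, d i = 1) {i j : ι} (hij : i ≠ j)
    (b : R) :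
    diagonalSL d hd * transvection hij b * (diagonalSL d hd)⁻¹ =
      transvection hij (↑(d i / d j) * b) := by
  rw [mul_inv_eq_iff_eq_mul]
  have hentry : (d i : R) * b = ↑(d i / d j) * b * d j := by
    rw [mul_right_comm, ← Units.val_mul, div_mul_cancel]
  ext k l
  rw [coe_mul, coe_mul, coe_diagonalSL, Matrix.diagonal_mul, Matrix.mul_diagonal]
  simp only [transvection_coe, Matrix.add_apply, Matrix.one_apply, Matrix.single_apply]
  grind

lemma commutatorElement_diagonalSL_transvection {d : ι → Rˣ} (hd : ∏ i, d i = 1) {i j : ι}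
    (hij : i ≠ j) (b : R) :
    ⁅diagonalSL d hd, transvection hij b⁆ = transvection hij ((↑(d i / d j) - 1) * b) := by
  rw [commutatorElement_def, conj_diagonalSL_transvection, transvection_inv, ← transvection_add,
    sub_one_mul, sub_eq_add_neg]

lemma transvection_mem_commutator_ker_map (f : R →+* S) {d : ι → Rˣ} (hd : ∏ i, d i = 1)
    (hfd : ∀ i, f (d i) = 1) {i j : ι} (hij : i ≠ j) {b : R} (hfb : f b = 0) :
    transvection hij ((↑(d i / d j) - 1) * b) ∈ ⁅(map (n := ι) f).ker, (map (n := ι) f).ker⁆ := by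
  rw [← commutatorElement_diagonalSL_transvection hd hij]
  exact Subgroup.commutator_mem_commutator ((diagonalSL_mem_ker_map_iff f hd).mpr hfd)
    ((transvection_mem_ker_map_iff f hij).mpr hfb)

lemma coe_transvection_zero_one_s3 (b : R) :
    (transvection (zero_ne_one (α := Fin 2)) b : Matrix (Fin 2) (Fin 2) R) = !![1, b; 0, 1] := by
  ext i j
  fin_cases i <;> fin_cases j <;> simp [transvection_coe]

lemma u₁_eq_transvection : u₁ = transvection zero_ne_one ⟨2, 2⟩ :=
  Subtype.ext (coe_transvection_zero_one_s3 _).symm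

lemma u₂_eq_transvection : u₂ = transvection zero_ne_one 4 :=
  Subtype.ext (coe_transvection_zero_one_s3 _).symm

lemma commutator_Gamma (β : GaussianInt) :
    ⁅Gamma β, Gamma β⁆ = ⁅(redMap β).ker, (redMap β).ker⁆.map (QuotientGroup.mk' PM) :=
  (Subgroup.map_commutator _ _ _).symm

lemma dvd_unit_inv_sub_one {β : R} {u : Rˣ} (hu : β ∣ u - 1) : β ∣ ↑u⁻¹ - 1 := by
  have hinv : (↑u⁻¹ - 1 : R) = ↑u⁻¹ * -(u - 1) := by simp [mul_sub]
  exact hinv ▸ (dvd_neg.mpr hu).mul_left _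

lemma mk_span_singleton_eq_one_iff {a β : R} :
    Ideal.Quotient.mk (Ideal.span {β}) a = 1 ↔ β ∣ a - 1 :=
  (Ideal.Quotient.mk_eq_one_iff_sub_mem a).trans Ideal.mem_span_singleton

lemma mk_transvection_mem_commutator_Gamma {β b : GaussianInt} {u : GaussianIntˣ}
    (hu : β ∣ u - 1) (hb : β ∣ b) :
    QuotientGroup.mk' PM (transvection zero_ne_one ((u ^ 2 - 1) * b)) ∈ ⁅Gamma β, Gamma β⁆ := by
  have hprod : ∏ k, ![u, u⁻¹] k = 1 := by simp
  have hone : ∀ k, Ideal.Quotient.mk (Ideal.span {β}) (![u, u⁻¹] k) = 1 :=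
    Fin.forall_fin_two.mpr ⟨mk_span_singleton_eq_one_iff.mpr hu,
      mk_span_singleton_eq_one_iff.mpr (dvd_unit_inv_sub_one hu)⟩
  have hzero : Ideal.Quotient.mk (Ideal.span {β}) b = 0 :=
    (Ideal.Quotient.eq_zero_iff_dvd β b).mpr hb
  have hmem := transvection_mem_commutator_ker_map _ hprod hone zero_ne_one hzero
  have hsq : ![u, u⁻¹] 0 / ![u, u⁻¹] 1 = u ^ 2 := by simp [sq]
  rw [hsq, Units.val_pow_eq_pow_val] at hmem
  rw [commutator_Gamma]
  exact Subgroup.mem_map_of_mem _ hmem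

/-- The imaginary unit `i` as a unit of `ℤ[i]`. -/
def unitI : GaussianIntˣ := ⟨⟨0, 1⟩, ⟨0, -1⟩, by decide, by decide⟩

theorem parabolics_mem_Gamma_and_commutator_general {x : GaussianInt} (hx : ⟨2, 2⟩ ∣ x) :
    QuotientGroup.mk' PM (transvection zero_ne_one x) ∈ Gamma ⟨1, 1⟩ ∧
    QuotientGroup.mk' PM (transvection zero_ne_one x) ∈ ⁅Gamma ⟨1, 1⟩, Gamma ⟨1, 1⟩⁆ := by
  suffices h : QuotientGroup.mk' PM (transvection zero_ne_one x) ∈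
      ⁅Gamma ⟨1, 1⟩, Gamma ⟨1, 1⟩⁆ from ⟨(Gamma ⟨1, 1⟩).commutator_le_self h, h⟩
  obtain ⟨c, rfl⟩ := hx
  have hfactor : (⟨2, 2⟩ : GaussianInt) = (unitI ^ 2 - 1) * -⟨1, 1⟩ := by decide
  rw [hfactor, mul_assoc]
  exact mk_transvection_mem_commutator_Gamma ⟨⟨0, 1⟩, by decide⟩
    ((dvd_neg.mpr dvd_rfl).mul_right c)

end

/-- The images in `PSL(2, ℤ[i])` of `[[1, 2+2i],[0,1]]` and `[[1, 4],[0,1]]` lie in `Γ(1+i)`,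
and moreover both lie in the commutator subgroup of `Γ(1+i)`. -/
theorem parabolics_mem_Gamma_and_commutator :
    QuotientGroup.mk' PM u₁ ∈ Gamma ⟨1, 1⟩ ∧
    QuotientGroup.mk' PM u₂ ∈ Gamma ⟨1, 1⟩ ∧
    QuotientGroup.mk' PM u₁ ∈ ⁅Gamma ⟨1, 1⟩, Gamma ⟨1, 1⟩⁆ ∧
    QuotientGroup.mk' PM u₂ ∈ ⁅Gamma ⟨1, 1⟩, Gamma ⟨1, 1⟩⁆ := by
  rw [u₁_eq_transvection, u₂_eq_transvection]
  have ⟨h₁, h₁'⟩ := parabolics_mem_Gamma_and_commutator_general (x := ⟨2, 2⟩) dvd_rfl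
  have ⟨h₂, h₂'⟩ := parabolics_mem_Gamma_and_commutator_general (x := 4) ⟨⟨1, -1⟩, by decide⟩
  exact ⟨h₁, h₂, h₁', h₂'⟩
end

section
/- The principal congruence subgroup Γ(2+2i) has index 192 in PSL(2,ℤ[i]), and the commutator subgroup of the principal congruence subgroup Γ(1+i) also has index 192 in PSL(2,ℤ[i]). -/
/-!
Put `ϖ = 1 + i`, so that `2` and `2 + 2i` are associates of `ϖ²` and `ϖ³`.

Counting `SL(2)` over the local rings `ℤ[i]/(ϖⁿ)` gives index `6` for `Γ(ϖ)` and `192` for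
`Γ(2 + 2i)`. Modulo `ϖ³`, two matrices of determinant one that are congruent to `1` modulo `ϖ`
commute up to sign, so the commutator subgroup of `Γ(ϖ)` is contained in `Γ(2 + 2i)` and `192`
divides its index.

Conversely, the Euclidean algorithm with quotients divisible by `ϖ` shows that `Γ(ϖ)` is generated
by five elements, namely four transvections and `diag(i, -i)`. Conjugation by `diag(i, -i)` inverts
the transvections, so their squares are commutators, while the square of `diag(i, -i)` is `-1`.
Hence the abelianization of `Γ(ϖ)` has order dividing `2⁵`, and the index of the commutator
subgroup divides `6 * 2⁵ = 192`.
-/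

namespace PSL2Zi

open Matrix Matrix.SpecialLinearGroup
open scoped commutatorElement MatrixGroups

section Group

variable {G : Type*} [Group G]

theorem relIndex_commutator_self (H : Subgroup G) :
    ⁅H, H⁆.relIndex H = Nat.card (Abelianization H) := by
  rw [← Subgroup.map_subtype_commutator, Subgroup.relIndex, Subgroup.subgroupOf,
    Subgroup.comap_map_eq_self_of_injective H.subtype_injective]
  rfl

theorem relIndex_commutator_closure_dvd (s : Set G) [Finite s] {n : ℕ}
    (hs : ∀ x ∈ s, x ^ n ∈ ⁅Subgroup.closure s, Subgroup.closure s⁆) :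
    ⁅Subgroup.closure s, Subgroup.closure s⁆.relIndex (Subgroup.closure s) ∣ n ^ Nat.card s := by
  set H := Subgroup.closure s
  have surj : Function.Surjective (Abelianization.of (G := H)) := QuotientGroup.mk'_surjective _
  have fgH : Group.FG H := Group.closure_finite_fg s
  have fgQ : Group.FG (Abelianization H) := Group.fg_of_surjective surj
  have rank_le : Group.rank (Abelianization H) ≤ Nat.card s :=
    (Group.rank_le_of_surjective _ surj).trans (Subgroup.rank_closure_finite_le_nat_card s)
  have pow_eq_one (x : H) : Abelianization.of x ^ n = 1 := by
    suffices ⊤ ≤ ((powMonoidHom n).comp Abelianization.of).ker from this (Subgroup.mem_top x)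
    rw [← Subgroup.closure_closure_coe_preimage, Subgroup.closure_le]
    intro y hy
    have hyn : y ^ n ∈ commutator H := by
      rw [← Subgroup.mem_map_iff_mem H.subtype_injective, Subgroup.map_subtype_commutator]
      exact hs y hy
    rw [SetLike.mem_coe, MonoidHom.mem_ker, MonoidHom.comp_apply, powMonoidHom_apply, ← map_pow]
    exact (QuotientGroup.eq_one_iff _).2 hyn
  rw [relIndex_commutator_self]
  exact (card_dvd_exponent_pow_rank' _ (surj.forall.2 pow_eq_one)).trans (pow_dvd_pow n rank_le)

theorem commutatorElement_eq_sq {g h : G} (hg : h * g * h⁻¹ = g⁻¹) : ⁅g, h⁆ = g ^ 2 := by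
  rw [commutatorElement_def, mul_assoc g, mul_assoc g, ← conj_inv, hg, inv_inv, sq]

end Group

section SpecialLinear

variable {R S : Type*} [CommRing R] [CommRing S]

section Transvection

variable {n : Type*} [Fintype n] [DecidableEq n] {i j : n} {hij : i ≠ j}

theorem map_transvection (f : R →+* S) (x : R) :
    SpecialLinearGroup.map f (transvection hij x) = transvection hij (f x) := by
  ext k l
  simp [transvection_coe, Matrix.single, Matrix.one_apply, apply_ite f]

theorem transvection_mem_of_mem_closure {H : Subgroup (SpecialLinearGroup n R)} {s : Set R}
    (hs : ∀ x ∈ s, transvection hij x ∈ H) {x : R} (hx : x ∈ AddSubgroup.closure s) :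
    transvection hij x ∈ H := by
  induction hx using AddSubgroup.closure_induction with
  | mem x hx => exact hs x hx
  | zero => exact transvection_coeff_zero (F := R) hij ▸ H.one_mem
  | add x y _ _ hx hy => exact transvection_add hij x y ▸ H.mul_mem hx hy
  | neg x _ hx => exact transvection_inv hij x ▸ H.inv_mem hx

end Transvection

/-- The upper unitriangular matrix `[1, x; 0, 1]`. -/
abbrev upper (x : R) : SL(2, R) := transvection (zero_ne_one' (Fin 2)) x

/-- The lower unitriangular matrix `[1, 0; x, 1]`. -/
abbrev lower (x : R) : SL(2, R) := transvection (one_ne_zero (α := Fin 2)) x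

/-- The homomorphism sending a unit `u` to the diagonal matrix `[u, 0; 0, u⁻¹]`. -/
def diag : Rˣ →* SL(2, R) where
  toFun u := ⟨!![(u : R), 0; 0, (u⁻¹ : Rˣ)], by simp⟩
  map_one' := by ext i j; fin_cases i <;> fin_cases j <;> simp
  map_mul' u v := Subtype.ext <| by
    change !![_, _; _, _] = !![_, _; _, _] * !![_, _; _, _]
    simp [mul_comm]

theorem coe_upper (x : R) : (upper x : Matrix (Fin 2) (Fin 2) R) = !![1, x; 0, 1] := by
  ext i j; fin_cases i <;> fin_cases j <;> simp [transvection_coe]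

theorem coe_lower (x : R) : (lower x : Matrix (Fin 2) (Fin 2) R) = !![1, 0; x, 1] := by
  ext i j; fin_cases i <;> fin_cases j <;> simp [transvection_coe]

theorem coe_diag (u : Rˣ) :
    (diag u : Matrix (Fin 2) (Fin 2) R) = !![(u : R), 0; 0, (u⁻¹ : Rˣ)] := rfl

theorem SL2_ext {g h : SL(2, R)} (h00 : g 0 0 = h 0 0) (h01 : g 0 1 = h 0 1)
    (h10 : g 1 0 = h 1 0) (h11 : g 1 1 = h 1 1) : g = h := by
  ext i j; fin_cases i <;> fin_cases j <;> assumption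

theorem apply_mul_apply_sub_eq_one (g : SL(2, R)) : g 0 0 * g 1 1 - g 0 1 * g 1 0 = 1 := by
  rw [← det_fin_two, det_coe]

theorem upper_mul_apply_zero (x : R) (g : SL(2, R)) (j : Fin 2) :
    (upper x * g) 0 j = g 0 j + x * g 1 j := by
  simp [coe_upper, Matrix.mul_apply, Fin.sum_univ_two]

theorem upper_mul_apply_one (x : R) (g : SL(2, R)) (j : Fin 2) : (upper x * g) 1 j = g 1 j := by
  simp [coe_upper, Matrix.mul_apply, Fin.sum_univ_two]

theorem mul_upper_apply_zero (g : SL(2, R)) (x : R) (i : Fin 2) : (g * upper x) i 0 = g i 0 := by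
  simp [coe_upper, Matrix.mul_apply, Fin.sum_univ_two]

theorem mul_upper_apply_one (g : SL(2, R)) (x : R) (i : Fin 2) :
    (g * upper x) i 1 = g i 0 * x + g i 1 := by
  simp [coe_upper, Matrix.mul_apply, Fin.sum_univ_two]

theorem lower_mul_apply_zero (x : R) (g : SL(2, R)) (j : Fin 2) : (lower x * g) 0 j = g 0 j := by
  simp [coe_lower, Matrix.mul_apply, Fin.sum_univ_two]

theorem lower_mul_apply_one (x : R) (g : SL(2, R)) (j : Fin 2) :
    (lower x * g) 1 j = x * g 0 j + g 1 j := by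
  simp [coe_lower, Matrix.mul_apply, Fin.sum_univ_two]

theorem eq_lower_mul_upper {g : SL(2, R)} (hg : g 0 0 = 1) : g = lower (g 1 0) * upper (g 0 1) := by
  have hdet := apply_mul_apply_sub_eq_one g
  rw [hg, one_mul, sub_eq_iff_eq_add'] at hdet
  apply SL2_ext <;>
    simp [lower_mul_apply_zero, lower_mul_apply_one, coe_upper, hg, hdet, mul_comm (g 1 0)]

theorem eq_diag_mul_upper {g : SL(2, R)} {u : Rˣ} (hu : g 0 0 = u) (hg : g 1 0 = 0) :
    g = diag u * upper ((u⁻¹ : Rˣ) * g 0 1) := by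
  have hdet := apply_mul_apply_sub_eq_one g
  rw [hg, mul_zero, sub_zero, hu, ← Units.eq_inv_mul_iff_mul_eq, mul_one] at hdet
  apply SL2_ext <;> simp [coe_diag, coe_upper, hu, hg, hdet]

theorem exists_eq_mul_upper {g h : SL(2, R)} (h0 : g 0 0 = h 0 0) (h1 : g 1 0 = h 1 0) :
    ∃ x, g = h * upper x := by
  have hg := apply_mul_apply_sub_eq_one g
  have hh := apply_mul_apply_sub_eq_one h
  refine ⟨h 1 1 * g 0 1 - h 0 1 * g 1 1, SL2_ext ?_ ?_ ?_ ?_⟩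
  · rw [mul_upper_apply_zero, h0]
  · rw [mul_upper_apply_one]
    linear_combination h 0 1 * hg - g 0 1 * hh - h 0 1 * g 1 1 * h0 + h 0 1 * g 0 1 * h1
  · rw [mul_upper_apply_zero, h1]
  · rw [mul_upper_apply_one]
    linear_combination h 1 1 * hg - g 1 1 * hh - h 1 1 * g 1 1 * h0 + h 1 1 * g 0 1 * h1

theorem diag_mul_upper_mul_inv (u : Rˣ) (x : R) :
    diag u * upper x * (diag u)⁻¹ = upper (u ^ 2 * x) := by
  rw [mul_inv_eq_iff_eq_mul]
  apply SL2_ext <;> simp [coe_diag, coe_upper, sq, mul_assoc, mul_comm x]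

theorem diag_mul_lower_mul_inv (u : Rˣ) (x : R) :
    diag u * lower x * (diag u)⁻¹ = lower ((u⁻¹ ^ 2 : Rˣ) * x) := by
  rw [mul_inv_eq_iff_eq_mul]
  apply SL2_ext <;> simp [coe_diag, coe_lower, sq, mul_assoc, mul_comm x]

theorem natCard_SL2 :
    Nat.card SL(2, R) = Nat.card {p : R × R // IsCoprime p.1 p.2} * Nat.card R := by
  choose complete h0 h1 using fun p : {p : R × R // IsCoprime p.1 p.2} => p.2.exists_SL2_col 0
  let mulUpper : {p : R × R // IsCoprime p.1 p.2} × R → SL(2, R) :=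
    fun q => complete q.1 * upper q.2
  have mulUpper_col (q) : ((mulUpper q 0 0, mulUpper q 1 0) : R × R) = q.1 := by
    simp only [mulUpper, mul_upper_apply_zero, h0, h1]
  have bijective : Function.Bijective mulUpper := by
    refine ⟨fun q r hqr => ?_, fun g => ?_⟩
    · have hcol : q.1 = r.1 := Subtype.ext (by rw [← mulUpper_col, ← mulUpper_col, hqr])
      have hupper : upper q.2 = upper r.2 := by simpa only [mulUpper, hcol, mul_right_inj] using hqr
      have hentry := congrArg (fun g : SL(2, R) => g 0 1) hupper
      simp only [coe_upper] at hentry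
      exact Prod.ext hcol hentry
    · let p : {p : R × R // IsCoprime p.1 p.2} := ⟨(g 0 0, g 1 0), isCoprime_col g 0⟩
      obtain ⟨x, hx⟩ := exists_eq_mul_upper (g := g) (h := complete p) (h0 p).symm (h1 p).symm
      exact ⟨(p, x), hx.symm⟩
  rw [← Nat.card_prod, Nat.card_congr (Equiv.ofBijective mulUpper bijective)]

theorem mem_of_forall_upper_lower_mem [IsLocalRing R] {H : Subgroup SL(2, R)}
    (hu : ∀ x : R, upper x ∈ H) (hl : ∀ x : R, lower x ∈ H) (g : SL(2, R)) : g ∈ H := by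
  have of_isUnit (h : SL(2, R)) (hunit : IsUnit (h 1 0)) : h ∈ H := by
    obtain ⟨c, hc⟩ := hunit
    have h00 : (upper ((1 - h 0 0) * (c⁻¹ : Rˣ)) * h) 0 0 = 1 := by
      rw [upper_mul_apply_zero, ← hc, Units.inv_mul_cancel_right, add_sub_cancel]
    rw [← H.mul_mem_cancel_left (hu _), eq_lower_mul_upper h00]
    exact H.mul_mem (hl _) (hu _)
  have hdet := apply_mul_apply_sub_eq_one g
  rw [sub_eq_add_neg] at hdet
  rcases IsLocalRing.isUnit_or_isUnit_of_add_one hdet with h | h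
  · by_cases hc : IsUnit (g 1 0)
    · exact of_isUnit g hc
    · rw [← H.mul_mem_cancel_left (hl 1)]
      refine of_isUnit _ ?_
      rw [lower_mul_apply_one, one_mul]
      have hsum : IsUnit (-g 1 0 + (g 0 0 + g 1 0)) := by
        rw [neg_add_cancel_comm_assoc]
        exact isUnit_of_mul_isUnit_left h
      exact (IsLocalRing.isUnit_or_isUnit_of_isUnit_add hsum).resolve_left
        (mt (IsUnit.neg_iff _).1 hc)
  · exact of_isUnit g (isUnit_of_mul_isUnit_right (IsUnit.neg_iff _ |>.1 h))

theorem SL2_map_surjective [IsLocalRing S] {f : R →+* S} (hf : Function.Surjective f) :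
    Function.Surjective (SpecialLinearGroup.map (n := Fin 2) f) := by
  rw [← MonoidHom.range_eq_top, Subgroup.eq_top_iff']
  apply mem_of_forall_upper_lower_mem
  all_goals
    intro y
    obtain ⟨x, rfl⟩ := hf y
    exact ⟨_, map_transvection f x⟩

open IsLocalRing in
theorem natCard_eq_natCard_residueField_mul [IsLocalRing R] :
    Nat.card R = Nat.card (ResidueField R) * Nat.card (maximalIdeal R) :=
  (Submodule.card_eq_card_quotient_mul_card (maximalIdeal R)).trans (mul_comm _ _)

theorem isCoprime_iff_isUnit_or_isUnit [IsLocalRing R] {x y : R} :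
    IsCoprime x y ↔ IsUnit x ∨ IsUnit y := by
  refine ⟨fun ⟨a, b, h⟩ => ?_, ?_⟩
  · exact (IsLocalRing.isUnit_or_isUnit_of_add_one h).imp
      isUnit_of_mul_isUnit_right isUnit_of_mul_isUnit_right
  · rintro (⟨u, rfl⟩ | ⟨u, rfl⟩)
    exacts [⟨(u⁻¹ : Rˣ), 0, by simp⟩, ⟨0, (u⁻¹ : Rˣ), by simp⟩]

open IsLocalRing in
theorem natCard_isCoprime_add [Finite R] [IsLocalRing R] :
    Nat.card {p : R × R // IsCoprime p.1 p.2} + Nat.card (maximalIdeal R) ^ 2 =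
      Nat.card R ^ 2 := by
  have compl : {p : R × R | IsCoprime p.1 p.2}ᶜ =
      (maximalIdeal R : Set R) ×ˢ (maximalIdeal R : Set R) := by
    ext p
    simp [isCoprime_iff_isUnit_or_isUnit]
  have := Set.ncard_add_ncard_compl {p : R × R | IsCoprime p.1 p.2}
  rw [compl, Set.ncard_prod, Nat.card_prod, ← sq, ← sq] at this
  exact this

open IsLocalRing in
theorem natCard_SL2_mul [Finite R] [IsLocalRing R] :
    Nat.card SL(2, R) * Nat.card (ResidueField R) ^ 2 =
      Nat.card R ^ 3 * (Nat.card (ResidueField R) ^ 2 - 1) := by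
  have card := natCard_eq_natCard_residueField_mul (R := R)
  have add := natCard_isCoprime_add (R := R)
  have coprime : Nat.card {p : R × R // IsCoprime p.1 p.2} =
      Nat.card (maximalIdeal R) ^ 2 * (Nat.card (ResidueField R) ^ 2 - 1) := by
    rw [Nat.mul_sub, mul_one, ← mul_pow, mul_comm (Nat.card (maximalIdeal R)), ← card, ← add,
      Nat.add_sub_cancel]
  rw [natCard_SL2, coprime, card]
  ring

theorem sq_mul_trace_eq_zero {p : R} (hp : p ^ 3 = 0) {X : Matrix (Fin 2) (Fin 2) R}
    (hX : (1 + p • X).det = 1) : p ^ 2 * X.trace = 0 := by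
  simp only [det_fin_two, Matrix.add_apply, Matrix.smul_apply, smul_eq_mul, one_apply_eq,
    one_apply_ne, ne_eq, zero_ne_one, one_ne_zero, not_false_eq_true] at hX
  rw [trace_fin_two]
  linear_combination p * hX - (X 0 0 * X 1 1 - X 0 1 * X 1 0) * hp

theorem one_add_smul_mul_one_add_smul {p : R} (hp2 : p ^ 2 = 2) (hp3 : p ^ 3 = 0)
    {X Y : Matrix (Fin 2) (Fin 2) R} (hX : (1 + p • X).det = 1) (hY : (1 + p • Y).det = 1) :
    (1 + p • X) * (1 + p • Y) = (1 + p • Y) * (1 + p • X) +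
      (2 * (X 0 1 * Y 1 0 - X 1 0 * Y 0 1)) • 1 := by
  have four : p ^ 2 * 2 = 0 := by linear_combination p * hp3 - p ^ 2 * hp2
  have trX := sq_mul_trace_eq_zero hp3 hX
  have trY := sq_mul_trace_eq_zero hp3 hY
  rw [trace_fin_two] at trX trY
  ext i j
  fin_cases i <;> fin_cases j <;>
    simp only [Fin.zero_eta, Fin.mk_one, Matrix.mul_apply, Fin.sum_univ_two, Matrix.add_apply,
      Matrix.smul_apply, smul_eq_mul, one_apply_eq, one_apply_ne, ne_eq, zero_ne_one, one_ne_zero,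
      not_false_eq_true]
  · linear_combination (X 0 1 * Y 1 0 - X 1 0 * Y 0 1) * hp2
  · linear_combination Y 0 1 * trX - X 0 1 * trY - (Y 0 1 * X 1 1 - X 0 1 * Y 1 1) * four
  · linear_combination -Y 1 0 * trX + X 1 0 * trY + (Y 1 0 * X 1 1 - X 1 0 * Y 1 1) * four
  · linear_combination (X 1 0 * Y 0 1 - X 0 1 * Y 1 0) * (four - hp2)

theorem commutatorElement_eq_one_or_eq_neg_one {p : R} (hp2 : p ^ 2 = 2) (hp3 : p ^ 3 = 0)
    (hdvd : ∀ x : R, p ∣ x ∨ p ∣ 1 - x) {A B : SL(2, R)} {X Y : Matrix (Fin 2) (Fin 2) R}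
    (hA : (A : Matrix (Fin 2) (Fin 2) R) = 1 + p • X)
    (hB : (B : Matrix (Fin 2) (Fin 2) R) = 1 + p • Y) : ⁅A, B⁆ = 1 ∨ ⁅A, B⁆ = -1 := by
  have comm := one_add_smul_mul_one_add_smul hp2 hp3 (hA ▸ A.det_coe) (hB ▸ B.det_coe)
  have two_smul_mul : (2 : R) • ((1 + p • Y) * (1 + p • X)) = (2 : R) • 1 := by
    have two_smul_p (Z : Matrix (Fin 2) (Fin 2) R) : (2 : R) • p • Z = 0 := by
      rw [smul_smul, ← hp2, ← pow_succ, hp3, zero_smul]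
    simp only [mul_add, add_mul, mul_one, one_mul, smul_add, two_smul_p, Matrix.mul_smul,
      add_zero]
  have four : (2 : R) * 2 = 0 := by linear_combination p * hp3 - (p ^ 2 + 2) * hp2
  rcases hdvd (X 0 1 * Y 1 0 - X 1 0 * Y 0 1) with ⟨s, hs⟩ | ⟨s, hs⟩
  · have vanish : 2 * (X 0 1 * Y 1 0 - X 1 0 * Y 0 1) = 0 := by
      linear_combination 2 * hs + s * hp3 - p * s * hp2
    refine .inl (commutatorElement_eq_one_iff_mul_comm.2 (Subtype.ext ?_))
    rw [coe_mul, coe_mul, hA, hB, comm, vanish, zero_smul, add_zero]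
  · have eq_two : 2 * (X 0 1 * Y 1 0 - X 1 0 * Y 0 1) = 2 := by
      linear_combination -2 * hs - s * hp3 + p * s * hp2
    right
    rw [commutatorElement_def, mul_assoc, ← _root_.mul_inv_rev, mul_inv_eq_iff_eq_mul, neg_one_mul]
    refine Subtype.ext ?_
    rw [coe_neg, coe_mul, coe_mul, hA, hB, comm, eq_neg_iff_add_eq_zero, eq_two, add_right_comm,
      ← two_smul R (_ * _), two_smul_mul, ← add_smul, ← two_mul, four, zero_smul]

section PrimePower

variable (P : Ideal R) (n : ℕ) [NeZero n]

instance isLocalRing_quotient_pow [P.IsMaximal] : IsLocalRing (R ⧸ P ^ n) := by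
  have : Nontrivial (R ⧸ P ^ n) :=
    Ideal.Quotient.nontrivial_iff.2 ((Ideal.pow_le_self (NeZero.ne n)).trans_lt
      (Ideal.IsMaximal.ne_top ‹_›).lt_top).ne
  refine .of_nonunits_add fun x y => ?_
  obtain ⟨x, rfl⟩ := Ideal.Quotient.mk_surjective x
  obtain ⟨y, rfl⟩ := Ideal.Quotient.mk_surjective y
  simp only [mem_nonunits_iff, ← map_add, Ideal.Quotient.isUnit_mk_pow_iff_notMem P (NeZero.ne n),
    not_not]
  exact P.add_mem

theorem maximalIdeal_quotient_pow [P.IsMaximal] :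
    IsLocalRing.maximalIdeal (R ⧸ P ^ n) = P.map (Ideal.Quotient.mk (P ^ n)) := by
  have comap_eq : (IsLocalRing.maximalIdeal (R ⧸ P ^ n)).comap (Ideal.Quotient.mk (P ^ n)) = P := by
    ext x
    rw [Ideal.mem_comap, IsLocalRing.mem_maximalIdeal, mem_nonunits_iff,
      Ideal.Quotient.isUnit_mk_pow_iff_notMem P (NeZero.ne n), not_not]
  have map_comap := Ideal.map_comap_of_surjective (Ideal.Quotient.mk (P ^ n))
    Ideal.Quotient.mk_surjective (IsLocalRing.maximalIdeal _)
  rw [← map_comap, comap_eq]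

theorem natCard_residueField_quotient_pow [P.IsMaximal] :
    Nat.card (IsLocalRing.ResidueField (R ⧸ P ^ n)) = Nat.card (R ⧸ P) :=
  Nat.card_congr <| (Ideal.quotEquivOfEq (maximalIdeal_quotient_pow P n)).trans
    (DoubleQuot.quotQuotEquivQuotOfLE (Ideal.pow_le_self (NeZero.ne n))) |>.toEquiv

theorem natCard_SL2_quotient_pow [IsDedekindDomain R] [P.IsMaximal] (hP : P ≠ ⊥) [Finite (R ⧸ P)] :
    Nat.card SL(2, R ⧸ P ^ n) * Nat.card (R ⧸ P) ^ 2 =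
      Nat.card (R ⧸ P) ^ (3 * n) * (Nat.card (R ⧸ P) ^ 2 - 1) := by
  have card : Nat.card (R ⧸ P ^ n) = Nat.card (R ⧸ P) ^ n := cardQuot_pow_of_prime hP
  have : Finite (R ⧸ P ^ n) := Nat.finite_of_card_ne_zero (by simp [card, Nat.card_pos.ne'])
  rw [← natCard_residueField_quotient_pow P n, natCard_SL2_mul, card,
    natCard_residueField_quotient_pow P n, ← pow_mul, mul_comm n]

end PrimePower
end SpecialLinear

section Index

theorem redMap_neg (β : GaussianInt) (g : SL2Zi) : redMap β (-g) = -redMap β g := by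
  ext i j
  simp [redMap]

theorem neg_one_eq_one_iff_dvd_two (β : GaussianInt) :
    (-1 : SL(2, GaussianInt ⧸ Ideal.span {β})) = 1 ↔ β ∣ 2 := by
  rw [← Ideal.mem_span_singleton, ← Ideal.Quotient.eq_zero_iff_mem, map_ofNat]
  have two : (2 : GaussianInt ⧸ Ideal.span {β}) = 0 ↔ -1 = (1 : GaussianInt ⧸ Ideal.span {β}) := by
    rw [neg_eq_iff_add_eq_zero, one_add_one_eq_two]
  refine ⟨fun h => two.2 ?_, fun h => ?_⟩
  · simpa using congrArg (fun g : SL(2, _) => g 0 0) h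
  · ext i j
    fin_cases i <;> fin_cases j <;> simp [two.1 h]

theorem index_Gamma_mul_orderOf {β : GaussianInt} (hβ : Function.Surjective (redMap β)) :
    (Gamma β).index * orderOf (-1 : SL(2, GaussianInt ⧸ Ideal.span {β})) =
      Nat.card SL(2, GaussianInt ⧸ Ideal.span {β}) := by
  have index_ker : (redMap β).ker.index = Nat.card SL(2, GaussianInt ⧸ Ideal.span {β}) := by
    rw [Subgroup.index_ker, MonoidHom.range_eq_top.2 hβ, Subgroup.card_top]
  have relIndex : (redMap β).ker.relIndex ((redMap β).ker ⊔ PM) =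
      orderOf (-1 : SL(2, GaussianInt ⧸ Ideal.span {β})) := by
    rw [Subgroup.relIndex_sup_left, Subgroup.relIndex_ker, PM, MonoidHom.map_zpowers,
      Nat.card_zpowers, redMap_neg, map_one]
  rw [Gamma, Subgroup.index_map, QuotientGroup.ker_mk',
    MonoidHom.range_eq_top.2 (QuotientGroup.mk'_surjective PM), Subgroup.index_top, mul_one,
    ← relIndex, mul_comm, Subgroup.relIndex_mul_index le_sup_left, index_ker]

end Index

section Gaussian

local notation "ϖ" => (⟨1, 1⟩ : GaussianInt)

/-- The unit `i` of `ℤ[i]`. -/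
def unitI : GaussianIntˣ := ⟨⟨0, 1⟩, ⟨0, -1⟩, by decide, by decide⟩

theorem pi_dvd_iff_even_norm {z : GaussianInt} : ϖ ∣ z ↔ Even z.norm := by
  constructor
  · rintro ⟨w, rfl⟩
    rw [Zsqrtd.norm_mul]
    exact Even.mul_right (by decide) _
  · intro h
    have : Even (z.re + z.im) := by
      simpa [Zsqrtd.norm_def, Int.even_add, Int.even_mul] using h
    obtain ⟨k, hk⟩ := this
    refine ⟨⟨k, k - z.re⟩, Zsqrtd.ext ?_ ?_⟩
    · simp
    · simpa [sub_add_eq_add_sub] using eq_sub_of_add_eq' hk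

theorem prime_pi : Prime ϖ := by
  refine ⟨by decide, ?_, fun a b hab => ?_⟩
  · rw [isUnit_iff_dvd_one, pi_dvd_iff_even_norm]; decide
  · simpa only [pi_dvd_iff_even_norm, Zsqrtd.norm_mul, Int.even_mul] using hab

theorem pi_dvd_or_pi_dvd_one_sub (z : GaussianInt) : ϖ ∣ z ∨ ϖ ∣ 1 - z := by
  simp only [pi_dvd_iff_even_norm, Zsqrtd.norm_def, Zsqrtd.re_sub, Zsqrtd.im_sub, Zsqrtd.re_one,
    Zsqrtd.im_one, Int.even_sub, Int.even_mul]
  grind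

instance isMaximal_span_pi : (Ideal.span {ϖ}).IsMaximal :=
  PrincipalIdealRing.isMaximal_of_irreducible prime_pi.irreducible

theorem natCard_quotient_span_pi : Nat.card (GaussianInt ⧸ Ideal.span {ϖ}) = 2 := by
  have mk_eq_zero {z : GaussianInt} : Ideal.Quotient.mk (Ideal.span {ϖ}) z = 0 ↔ ϖ ∣ z := by
    rw [Ideal.Quotient.eq_zero_iff_mem, Ideal.mem_span_singleton]
  rw [Nat.card_eq_two_iff' 0]
  refine ⟨1, one_ne_zero, Ideal.Quotient.mk_surjective.forall.2 fun z hz => ?_⟩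
  rw [← sub_eq_zero, ← neg_sub, neg_eq_zero, ← map_one (Ideal.Quotient.mk _), ← map_sub]
  exact mk_eq_zero.2 ((pi_dvd_or_pi_dvd_one_sub z).resolve_left (mt mk_eq_zero.2 hz))

theorem span_two_two_eq_span_pi_pow : Ideal.span {(⟨2, 2⟩ : GaussianInt)} = Ideal.span {ϖ} ^ 3 := by
  rw [Ideal.span_singleton_pow, Ideal.span_singleton_eq_span_singleton]
  exact ⟨unitI, by decide⟩

theorem index_Gamma_mul_orderOf_of_span_eq {β : GaussianInt} {n : ℕ} [NeZero n]
    (hβ : Ideal.span {β} = Ideal.span {ϖ} ^ n) :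
    (Gamma β).index * orderOf (-1 : SL(2, GaussianInt ⧸ Ideal.span {β})) * 4 = 2 ^ (3 * n) * 3 := by
  have surjective : Function.Surjective (redMap β) := by
    have : IsLocalRing (GaussianInt ⧸ Ideal.span {β}) := hβ ▸ inferInstance
    exact SL2_map_surjective Ideal.Quotient.mk_surjective
  have : Finite (GaussianInt ⧸ Ideal.span {ϖ}) :=
    Nat.finite_of_card_ne_zero (by simp [natCard_quotient_span_pi])
  have card := natCard_SL2_quotient_pow (Ideal.span {ϖ}) n (by simpa using prime_pi.ne_zero)
  rw [natCard_quotient_span_pi] at card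
  rwa [index_Gamma_mul_orderOf surjective, hβ]

theorem index_Gamma_pi : (Gamma ϖ).index = 6 := by
  have h := index_Gamma_mul_orderOf_of_span_eq (β := ϖ) (n := 1) (pow_one _).symm
  have neg_one : (-1 : SL(2, GaussianInt ⧸ Ideal.span {ϖ})) = 1 :=
    (neg_one_eq_one_iff_dvd_two _).2 ⟨⟨1, -1⟩, by decide⟩
  rw [neg_one, orderOf_one] at h
  lia

theorem index_Gamma_two_two : (Gamma ⟨2, 2⟩).index = 192 := by
  have h := index_Gamma_mul_orderOf_of_span_eq span_two_two_eq_span_pi_pow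
  have two : orderOf (-1 : SL(2, GaussianInt ⧸ Ideal.span {(⟨2, 2⟩ : GaussianInt)})) = 2 := by
    refine orderOf_eq_prime neg_one_sq ?_
    rw [Ne, neg_one_eq_one_iff_dvd_two]
    intro hdvd
    have norm_dvd : (8 : ℤ) ∣ 4 := map_dvd Zsqrtd.normMonoidHom hdvd
    lia
  rw [two] at h
  lia

theorem mem_ker_redMap_iff {β : GaussianInt} {g : SL2Zi} :
    g ∈ (redMap β).ker ↔ ∀ i j, β ∣ (g - 1 : Matrix (Fin 2) (Fin 2) GaussianInt) i j := by
  have entry (i j : Fin 2) : β ∣ (g - 1 : Matrix (Fin 2) (Fin 2) GaussianInt) i j ↔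
      redMap β g i j = (1 : SL(2, GaussianInt ⧸ Ideal.span {β})) i j := by
    rw [← Ideal.mem_span_singleton, Matrix.sub_apply, ← Ideal.Quotient.mk_eq_mk_iff_sub_mem,
      coe_one, Matrix.one_apply, Matrix.one_apply, apply_ite (Ideal.Quotient.mk _), map_one,
      map_zero]
    rfl
  simp only [entry, MonoidHom.mem_ker, Matrix.SpecialLinearGroup.ext_iff]

theorem exists_coe_eq_one_add_smul {β : GaussianInt} {g : SL2Zi} (hg : g ∈ (redMap β).ker) :
    ∃ X : Matrix (Fin 2) (Fin 2) GaussianInt,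
      (g : Matrix (Fin 2) (Fin 2) GaussianInt) = 1 + β • X := by
  choose X hX using mem_ker_redMap_iff.1 hg
  exact ⟨X, sub_eq_iff_eq_add'.1 (Matrix.ext hX)⟩

theorem mk_neg (g : SL2Zi) : ((-g : SL2Zi) : PSL2Zi) = g := by
  refine QuotientGroup.eq.2 ?_
  have neg_inv_mul : (-g)⁻¹ * g = -1 := by
    rw [inv_mul_eq_iff_eq_mul, neg_mul_neg, mul_one]
  rw [neg_inv_mul]
  exact Subgroup.mem_zpowers _

theorem mk_mem_Gamma {β : GaussianInt} {g : SL2Zi} (hg : redMap β g = 1 ∨ redMap β g = -1) :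
    (g : PSL2Zi) ∈ Gamma β := by
  rcases hg with hg | hg
  · exact Subgroup.mem_map_of_mem _ hg
  · refine ⟨-g, ?_, mk_neg g⟩
    rw [SetLike.mem_coe, MonoidHom.mem_ker, redMap_neg, hg, neg_neg]

theorem commutator_Gamma_pi_le : ⁅Gamma ϖ, Gamma ϖ⁆ ≤ Gamma ⟨2, 2⟩ := by
  rw [Gamma, ← Subgroup.map_commutator, Subgroup.map_le_iff_le_comap, Subgroup.commutator_le]
  intro g hg h hh
  obtain ⟨X, hX⟩ := exists_coe_eq_one_add_smul hg
  obtain ⟨Y, hY⟩ := exists_coe_eq_one_add_smul hh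
  let q := Ideal.Quotient.mk (Ideal.span {(⟨2, 2⟩ : GaussianInt)})
  have reduce {k : SL2Zi} {Z : Matrix (Fin 2) (Fin 2) GaussianInt}
      (hk : (k : Matrix (Fin 2) (Fin 2) GaussianInt) = 1 + ϖ • Z) :
      (redMap ⟨2, 2⟩ k : Matrix (Fin 2) (Fin 2) _) = 1 + q ϖ • Z.map q := by
    change (k : Matrix (Fin 2) (Fin 2) GaussianInt).map q = _
    rw [hk, Matrix.map_add q (map_add q), Matrix.map_one q (map_zero q) (map_one q),
      Matrix.map_smul' q _ _ (map_mul q)]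
  have sq : q ϖ ^ 2 = 2 := by
    rw [← map_pow, ← map_ofNat q, Ideal.Quotient.mk_eq_mk_iff_sub_mem, Ideal.mem_span_singleton]
    exact ⟨unitI, by decide⟩
  have cube : q ϖ ^ 3 = 0 := by
    rw [← map_pow, Ideal.Quotient.eq_zero_iff_mem, Ideal.mem_span_singleton]
    exact ⟨unitI, by decide⟩
  have dvd_or (x) : q ϖ ∣ x ∨ q ϖ ∣ 1 - x := by
    obtain ⟨z, rfl⟩ := Ideal.Quotient.mk_surjective x
    rw [← map_one q, ← map_sub]
    exact (pi_dvd_or_pi_dvd_one_sub z).imp (map_dvd q) (map_dvd q)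
  apply mk_mem_Gamma
  rw [map_commutatorElement]
  exact commutatorElement_eq_one_or_eq_neg_one sq cube dvd_or (reduce hX) (reduce hY)

theorem two_mul_norm_mod_le (x : GaussianInt) {y : GaussianInt} (hy : y ≠ 0) :
    2 * (x % y).norm ≤ y.norm := by
  have hy' : (y : ℂ) ≠ 0 := by rwa [Ne, ← GaussianInt.toComplex_zero, GaussianInt.toComplex_inj]
  have normSq_le : Complex.normSq ((x / y : ℂ) - ((x / y : GaussianInt) : ℂ)) ≤ 1 / 2 := by
    rw [Complex.normSq_apply, Complex.sub_re, Complex.sub_im, GaussianInt.toComplex_re_div,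
      GaussianInt.toComplex_im_div, ← sq, ← sq, ← sq_abs, ← sq_abs (_ - _)]
    have := pow_le_pow_left₀ (abs_nonneg _) (abs_sub_round (x / y : ℂ).re) 2
    have := pow_le_pow_left₀ (abs_nonneg _) (abs_sub_round (x / y : ℂ).im) 2
    linarith
  have normSq_mod : ((x % y).norm : ℝ) =
      Complex.normSq y * Complex.normSq ((x / y : ℂ) - ((x / y : GaussianInt) : ℂ)) := by
    rw [← Complex.normSq_mul, mul_sub, mul_div_cancel₀ _ hy']
    simp [GaussianInt.mod_def]
  have : (2 * (x % y).norm : ℝ) ≤ y.norm := by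
    rw [normSq_mod, GaussianInt.intCast_real_norm]
    nlinarith [Complex.normSq_nonneg (y : ℂ)]
  exact_mod_cast this

-- Rounding alone gives `≤`; equality would force `x` and `y` to have the same parity.
theorem norm_mod_pi_mul_lt {x y : GaussianInt} (hy : y ≠ 0) (hxy : ¬(ϖ ∣ x ↔ ϖ ∣ y)) :
    (x % (ϖ * y)).norm < y.norm := by
  have norm_pi : Zsqrtd.norm ϖ = 2 := by decide
  have le := two_mul_norm_mod_le x (mul_ne_zero prime_pi.ne_zero hy)
  rw [Zsqrtd.norm_mul, norm_pi] at le
  refine lt_of_le_of_ne (by lia) fun heq => hxy ?_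
  rw [pi_dvd_iff_even_norm (z := y), ← heq, ← pi_dvd_iff_even_norm, GaussianInt.mod_def, mul_assoc,
    dvd_sub_left (dvd_mul_right ϖ _)]

theorem pi_dvd_induction {P : GaussianInt → GaussianInt → Prop} (zero : ∀ a, P a 0)
    (sub_left : ∀ a c q, P (a - ϖ * q * c) c → P a c)
    (sub_right : ∀ a c q, P a (c - ϖ * q * a) → P a c) (a c : GaussianInt) (ha : ¬ϖ ∣ a)
    (hc : ϖ ∣ c) : P a c := by
  induction hn : c.norm.toNat using Nat.strong_induction_on generalizing a c with
  | _ n ih =>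
    by_cases hc0 : c = 0
    · exact hc0 ▸ zero a
    have mod_eq (x y : GaussianInt) : x % (ϖ * y) = x - ϖ * (x / (ϖ * y)) * y := by
      rw [GaussianInt.mod_def, mul_right_comm]
    have not_dvd : ¬ϖ ∣ a % (ϖ * c) := by
      rwa [mod_eq, dvd_sub_left (mul_assoc ϖ _ c ▸ dvd_mul_right ϖ _)]
    have dvd : ϖ ∣ c % (ϖ * (a % (ϖ * c))) := by
      rwa [mod_eq, dvd_sub_left (mul_assoc ϖ _ _ ▸ dvd_mul_right ϖ _)]
    have hne : a % (ϖ * c) ≠ 0 := fun h => not_dvd (h ▸ dvd_zero ϖ)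
    have lt := (norm_mod_pi_mul_lt (x := c) hne (by tauto)).trans
      (norm_mod_pi_mul_lt (x := a) hc0 (by tauto))
    have := GaussianInt.norm_nonneg (c % (ϖ * (a % (ϖ * c))))
    apply sub_left a c (a / (ϖ * c))
    rw [← mod_eq]
    apply sub_right _ _ (c / (ϖ * (a % (ϖ * c))))
    rw [← mod_eq]
    exact ih _ (by lia) _ _ not_dvd dvd rfl

theorem exists_unitI_pow_eq_of_norm_eq_one {z : GaussianInt} (hz : z.norm = 1) :
    ∃ k : ℕ, (unitI ^ k : GaussianInt) = z := by
  obtain ⟨x, y⟩ := z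
  replace hz : x * x - -1 * y * y = 1 := hz
  obtain ⟨hx, hx'⟩ : -1 ≤ x ∧ x ≤ 1 := by constructor <;> nlinarith [sq_nonneg y]
  obtain ⟨hy, hy'⟩ : -1 ≤ y ∧ y ≤ 1 := by constructor <;> nlinarith [sq_nonneg x]
  interval_cases x <;> interval_cases y <;> first | contradiction | clear hz
  exacts [⟨2, by decide⟩, ⟨3, by decide⟩, ⟨1, by decide⟩, ⟨0, by decide⟩]

theorem mem_zpowers_unitI (u : GaussianIntˣ) : u ∈ Subgroup.zpowers unitI := by
  obtain ⟨k, hk⟩ := exists_unitI_pow_eq_of_norm_eq_one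
    ((Zsqrtd.norm_eq_one_iff' (by decide) (u : GaussianInt)).2 u.isUnit)
  exact ⟨k, Units.ext (by simpa using hk)⟩

theorem mem_of_forall_upper_lower_pi_mul_mem {H : Subgroup SL2Zi}
    (upper_mem : ∀ x, upper (ϖ * x) ∈ H) (lower_mem : ∀ x, lower (ϖ * x) ∈ H)
    (diag_mem : diag unitI ∈ H) {g : SL2Zi} (h00 : ¬ϖ ∣ g 0 0) (h01 : ϖ ∣ g 0 1) (h10 : ϖ ∣ g 1 0) :
    g ∈ H := by
  suffices ∀ a c, ¬ϖ ∣ a → ϖ ∣ c → ∀ g : SL2Zi, g 0 0 = a → g 1 0 = c → ϖ ∣ g 0 1 → g ∈ H from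
    this _ _ h00 h10 g rfl rfl h01
  apply pi_dvd_induction
  · intro a g _ hc hb
    have hdet := apply_mul_apply_sub_eq_one g
    rw [hc, mul_zero, sub_zero] at hdet
    obtain ⟨u, hu⟩ := IsUnit.of_mul_eq_one _ hdet
    obtain ⟨b, hb⟩ := hb
    rw [eq_diag_mul_upper hu.symm hc, hb, mul_left_comm]
    obtain ⟨k, rfl⟩ := mem_zpowers_unitI u
    exact H.mul_mem (map_zpow diag unitI k ▸ H.zpow_mem diag_mem k) (upper_mem _)
  · intro a c q ih g ha hc hb
    have mem := ih (upper (ϖ * -q) * g) (by rw [upper_mul_apply_zero, ha, hc]; ring)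
      (by rw [upper_mul_apply_one, hc])
      (by rw [upper_mul_apply_zero, mul_assoc]; exact dvd_add hb (dvd_mul_right _ _))
    rwa [H.mul_mem_cancel_left (upper_mem _)] at mem
  · intro a c q ih g ha hc hb
    have mem := ih (lower (ϖ * -q) * g) (by rw [lower_mul_apply_zero, ha])
      (by rw [lower_mul_apply_one, ha, hc]; ring) (by rwa [lower_mul_apply_zero])
    rwa [H.mul_mem_cancel_left (lower_mem _)] at mem

theorem mul_mem_closure_pair_mul_unitI (w z : GaussianInt) :
    w * z ∈ AddSubgroup.closure {w, w * unitI} := by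
  refine AddSubgroup.mem_closure_pair.2 ⟨z.re, z.im, ?_⟩
  ext <;> simp [unitI] <;> ring

/-- Generators of the kernel of reduction modulo `1 + i`; the last one squares to `-1` and
conjugates each of the others to its inverse. -/
def kerGenerators : Fin 5 → SL2Zi :=
  ![upper ϖ, upper (ϖ * unitI), lower ϖ, lower (ϖ * unitI), diag unitI]

theorem closure_range_kerGenerators :
    Subgroup.closure (Set.range kerGenerators) = (redMap ϖ).ker := by
  refine le_antisymm ((Subgroup.closure_le _).2 ?_) fun g hg => ?_
  · rw [Set.range_subset_iff]
    intro k
    rw [SetLike.mem_coe, mem_ker_redMap_iff]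
    fin_cases k <;> intro i j <;> fin_cases i <;> fin_cases j <;>
      simp [kerGenerators, coe_upper, coe_lower, coe_diag, pi_dvd_iff_even_norm, unitI,
        Zsqrtd.norm_def]
  · have mem (k) : kerGenerators k ∈ Subgroup.closure (Set.range kerGenerators) :=
      Subgroup.subset_closure (Set.mem_range_self k)
    rw [mem_ker_redMap_iff] at hg
    refine mem_of_forall_upper_lower_pi_mul_mem (fun x => ?_) (fun x => ?_) (mem 4) ?_
      (by simpa using hg 0 1) (by simpa using hg 1 0)
    · refine transvection_mem_of_mem_closure ?_ (mul_mem_closure_pair_mul_unitI ϖ x)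
      rintro _ (rfl | rfl)
      exacts [mem 0, mem 1]
    · refine transvection_mem_of_mem_closure ?_ (mul_mem_closure_pair_mul_unitI ϖ x)
      rintro _ (rfl | rfl)
      exacts [mem 2, mem 3]
    · intro hdvd
      have h1 : ϖ ∣ g 0 0 - 1 := by simpa using hg 0 0
      exact prime_pi.not_isUnit (isUnit_of_dvd_one ((dvd_sub_right hdvd).1 h1))

theorem commutatorElement_upper_diag_unitI (x : GaussianInt) :
    ⁅upper x, diag unitI⁆ = upper x ^ 2 := by
  refine commutatorElement_eq_sq ?_
  rw [diag_mul_upper_mul_inv, transvection_inv, ← neg_one_mul x]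
  rfl

theorem commutatorElement_lower_diag_unitI (x : GaussianInt) :
    ⁅lower x, diag unitI⁆ = lower x ^ 2 := by
  refine commutatorElement_eq_sq ?_
  rw [diag_mul_lower_mul_inv, transvection_inv, ← neg_one_mul x]
  rfl

theorem diag_unitI_sq : diag unitI ^ 2 = -1 := by
  decide

theorem relIndex_commutator_Gamma_pi_dvd :
    ⁅Gamma ϖ, Gamma ϖ⁆.relIndex (Gamma ϖ) ∣ 2 ^ 5 := by
  let s : Set PSL2Zi := Set.range (QuotientGroup.mk' PM ∘ kerGenerators)
  have closure_s : Subgroup.closure s = Gamma ϖ := by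
    rw [Gamma, ← closure_range_kerGenerators, MonoidHom.map_closure, ← Set.range_comp]
  have mem (k) : (kerGenerators k : PSL2Zi) ∈ Gamma ϖ :=
    closure_s ▸ Subgroup.subset_closure (Set.mem_range_self k)
  have sq_mem {k} (hk : ⁅kerGenerators k, kerGenerators 4⁆ = kerGenerators k ^ 2) :
      (kerGenerators k : PSL2Zi) ^ 2 ∈ ⁅Gamma ϖ, Gamma ϖ⁆ := by
    rw [← QuotientGroup.mk_pow, ← hk]
    exact Subgroup.commutator_mem_commutator (mem k) (mem 4)
  have dvd := relIndex_commutator_closure_dvd s (n := 2) (by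
    rw [Set.forall_mem_range, closure_s]
    intro k
    fin_cases k
    · exact sq_mem (commutatorElement_upper_diag_unitI _)
    · exact sq_mem (commutatorElement_upper_diag_unitI _)
    · exact sq_mem (commutatorElement_lower_diag_unitI _)
    · exact sq_mem (commutatorElement_lower_diag_unitI _)
    · have : ((diag unitI : SL2Zi) : PSL2Zi) ^ 2 = 1 := by
        rw [← QuotientGroup.mk_pow, diag_unitI_sq, mk_neg, QuotientGroup.mk_one]
      exact this ▸ Subgroup.one_mem _)
  rw [closure_s] at dvd
  exact dvd.trans (pow_dvd_pow 2 ((Finite.card_range_le _).trans_eq (Nat.card_fin 5)))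

theorem index_commutator_Gamma_pi : ⁅Gamma ϖ, Gamma ϖ⁆.index = 192 := by
  refine Nat.dvd_antisymm ?_ ?_
  · rw [← Subgroup.relIndex_mul_index (Subgroup.commutator_le_self (Gamma ϖ)), index_Gamma_pi]
    exact mul_dvd_mul_right relIndex_commutator_Gamma_pi_dvd 6
  · rw [← index_Gamma_two_two]
    exact Subgroup.index_dvd_of_le commutator_Gamma_pi_le

end Gaussian

end PSL2Zi

/-- `Γ(2+2i)` has index `192` in `PSL(2, ℤ[i])`, and the commutator subgroup of `Γ(1+i)`
also has index `192` in `PSL(2, ℤ[i])`. -/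
theorem index_Gamma_two_two_and_commutator :
    (Gamma ⟨2, 2⟩).index = 192 ∧ (⁅Gamma ⟨1, 1⟩, Gamma ⟨1, 1⟩⁆ : Subgroup PSL2Zi).index = 192 :=
  ⟨PSL2Zi.index_Gamma_two_two, PSL2Zi.index_commutator_Gamma_pi⟩
end

section
/- Let T₀ = I, T₁ = [[0,1],[−1,0]], T₂ = [[1,−1],[0,1]], T₃ = [[1,0],[−1,1]], T₄ = [[1,1],[−1,0]], T₅ = [[0,−1],[1,1]], viewed as elements of SL(2,ℤ[i]). Then every element of PSL(2,ℤ[i]) can be written as γ·(image of T_i) for a unique index i ∈ {0,1,2,3,4,5} and some γ in the principal congruence subgroup Γ(1+i); that is, the images of T₀,…,T₅ form a complete system of right coset representatives for Γ(1+i) in PSL(2,ℤ[i]). -/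
/-- The six matrices `T₀ = I`, `T₁ = [[0,1],[−1,0]]`, `T₂ = [[1,−1],[0,1]]`, `T₃ = [[1,0],[−1,1]]`,
`T₄ = [[1,1],[−1,0]]`, `T₅ = [[0,−1],[1,1]]` as elements of `SL(2, ℤ[i])`. -/
def T : Fin 6 → SL2Zi
  | 0 => 1
  | 1 => ⟨!![0, 1; -1, 0], by simp [Matrix.det_fin_two_of]⟩
  | 2 => ⟨!![1, -1; 0, 1], by simp [Matrix.det_fin_two_of]⟩
  | 3 => ⟨!![1, 0; -1, 1], by simp [Matrix.det_fin_two_of]⟩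
  | 4 => ⟨!![1, 1; -1, 0], by simp [Matrix.det_fin_two_of]⟩
  | 5 => ⟨!![0, -1; 1, 1], by simp [Matrix.det_fin_two_of]⟩

/-!
The residue field of `ℤ[i]` at `1 + i` is `𝔽₂`, an element of `ℤ[i]` being divisible by `1 + i`
exactly when it is killed by `i ↦ -1`. As `-I` reduces to `I` in characteristic two, reduction
modulo `1 + i` descends to a homomorphism `PSL(2, ℤ[i]) → SL(2, 𝔽₂)` with kernel `Γ(1 + i)`. Its
target has six elements and the `Tᵢ` have distinct images there, so each coset of `Γ(1 + i)`
contains exactly one of them.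
-/

open scoped Zsqrtd MatrixGroups

section Cosets

variable {G H ι : Type*} [Group G] [MulOneClass H] (f : G →* H)

theorem exists_mem_ker_eq_mul_iff (g t : G) : (∃ γ ∈ f.ker, g = γ * t) ↔ f g = f t := by
  constructor
  · rintro ⟨γ, hγ, rfl⟩
    rw [map_mul, MonoidHom.mem_ker.mp hγ, one_mul]
  · intro h
    refine ⟨g * t⁻¹, ?_, (inv_mul_cancel_right g t).symm⟩
    rw [MonoidHom.mem_ker, map_mul, h, ← map_mul, mul_inv_cancel, map_one]

theorem existsUnique_exists_mem_ker_eq_mul {t : ι → G} (ht : Function.Bijective (f ∘ t)) (g : G) :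
    ∃! i, ∃ γ ∈ f.ker, g = γ * t i := by
  simpa only [exists_mem_ker_eq_mul_iff, Function.comp_apply, eq_comm] using ht.existsUnique (f g)

end Cosets

section QuadraticRing

variable {d : ℤ} {R : Type*}

theorem zsqrtd_hom_apply [NonAssocRing R] (f : ℤ√d →+* R) (z : ℤ√d) :
    f z = z.re + f Zsqrtd.sqrtd * z.im := by
  rw [← map_intCast f, ← map_intCast f, ← map_mul, ← map_add, ← Zsqrtd.decompose]

theorem zsqrtd_hom_sqrtd_mul_self [NonAssocRing R] (f : ℤ√d →+* R) :
    f Zsqrtd.sqrtd * f Zsqrtd.sqrtd = d := by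
  rw [← map_mul, Zsqrtd.dmuld, map_intCast]

variable [CommRing R] {n : ℕ} [CharP R n] {f : ℤ√d →+* R} {z w : ℤ√d}

theorem norm_dvd_mul_star_of_map_eq_zero (hn : w.norm.natAbs = n) (hz : f z = 0) (hw : f w = 0) :
    (w.norm : ℤ√d) ∣ z * star w := by
  have hθ := zsqrtd_hom_sqrtd_mul_self f
  rw [zsqrtd_hom_apply] at hz hw
  have norm_dvd_iff (m : ℤ) : w.norm ∣ m ↔ (m : R) = 0 := by
    rw [← Int.natAbs_dvd, hn, CharP.intCast_eq_zero_iff R n]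
  rw [Zsqrtd.intCast_dvd, norm_dvd_iff, norm_dvd_iff]
  simp only [Zsqrtd.re_mul, Zsqrtd.im_mul, Zsqrtd.re_star, Zsqrtd.im_star]
  push_cast
  -- With `θ = f √d`, substitute `z.re = -θ * z.im`, `w.re = -θ * w.im` and `θ ^ 2 = d`.
  constructor
  · linear_combination (w.re : R) * hz - f Zsqrtd.sqrtd * z.im * hw + (z.im * w.im : R) * hθ
  · linear_combination (z.im : R) * hw - (w.im : R) * hz

theorem ker_zsqrtd_hom_eq_span_singleton (hw : f w = 0) (hn : w.norm.natAbs = n) (hn₀ : n ≠ 0) :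
    RingHom.ker f = Ideal.span {w} := by
  ext z
  rw [RingHom.mem_ker, Ideal.mem_span_singleton]
  constructor
  · intro hz
    obtain ⟨k, hk⟩ := norm_dvd_mul_star_of_map_eq_zero hn hz hw
    have norm_ne_zero : w.norm ≠ 0 := by rwa [← Int.natAbs_ne_zero, hn]
    refine ⟨k, Zsqrtd.eq_of_smul_eq_smul_left norm_ne_zero ?_⟩
    rw [Zsqrtd.norm_eq_mul_conj] at hk ⊢
    linear_combination w * hk
  · rintro ⟨k, rfl⟩
    rw [map_mul, hw, zero_mul]

end QuadraticRing

section SpecialLinearGroup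

variable {n R S S' : Type*} [Fintype n] [DecidableEq n] [CommRing R] [CommRing S] [CommRing S']

theorem mem_ker_specialLinearGroup_map {f : R →+* S} {A : Matrix.SpecialLinearGroup n R} :
    A ∈ (Matrix.SpecialLinearGroup.map f).ker ↔
      ∀ i j, A i j - (1 : Matrix n n R) i j ∈ RingHom.ker f := by
  rw [MonoidHom.mem_ker, ← map_one (Matrix.SpecialLinearGroup.map f),
    Matrix.SpecialLinearGroup.ext_iff]
  simp only [RingHom.mem_ker, map_sub, sub_eq_zero, Matrix.SpecialLinearGroup.map_apply_coe,
    Matrix.SpecialLinearGroup.coe_one, RingHom.mapMatrix_apply, Matrix.map_apply]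

theorem ker_specialLinearGroup_map_congr {f : R →+* S} {g : R →+* S'}
    (h : RingHom.ker f = RingHom.ker g) :
    (Matrix.SpecialLinearGroup.map (n := n) f).ker = (Matrix.SpecialLinearGroup.map g).ker := by
  ext A
  simp only [mem_ker_specialLinearGroup_map, h]

theorem specialLinearGroup_map_neg_one_eq_one [Fact (Even (Fintype.card n))] [CharP S 2]
    (f : R →+* S) : Matrix.SpecialLinearGroup.map (n := n) f (-1) = 1 := by
  ext i j
  simp [CharTwo.neg_eq, Matrix.one_apply, apply_ite f]

end SpecialLinearGroup

/-- The residue map `ℤ[i] → 𝔽₂` at the prime `1 + i`, given by `i ↦ -1`. -/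
def residueMap : GaussianInt →+* ZMod 2 :=
  Zsqrtd.lift ⟨-1, by decide⟩

theorem ker_residueMap : RingHom.ker residueMap = Ideal.span {⟨1, 1⟩} :=
  ker_zsqrtd_hom_eq_span_singleton (by decide) (by decide) two_ne_zero

theorem ker_redMap_one_add_I :
    (redMap ⟨1, 1⟩).ker = (Matrix.SpecialLinearGroup.map residueMap).ker :=
  ker_specialLinearGroup_map_congr <| by rw [Ideal.mk_ker, ker_residueMap]

theorem PM_le_ker_map_residueMap :
    PM ≤ (Matrix.SpecialLinearGroup.map (n := Fin 2) residueMap).ker := by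
  rw [PM, Subgroup.zpowers_le, MonoidHom.mem_ker, specialLinearGroup_map_neg_one_eq_one]

/-- Reduction modulo `1 + i` as a homomorphism `PSL(2, ℤ[i]) → SL(2, 𝔽₂)`; it is defined on the
quotient by `±I` because `-I = I` over `𝔽₂`. -/
def pslReduction : PSL2Zi →* SL(2, ZMod 2) :=
  QuotientGroup.lift PM (Matrix.SpecialLinearGroup.map residueMap) PM_le_ker_map_residueMap

theorem ker_pslReduction : pslReduction.ker = Gamma ⟨1, 1⟩ := by
  rw [pslReduction, QuotientGroup.ker_lift, Gamma, ker_redMap_one_add_I]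

theorem card_SL_two_zmod_two : Fintype.card SL(2, ZMod 2) = 6 := by
  decide

theorem map_residueMap_comp_T_injective :
    Function.Injective (Matrix.SpecialLinearGroup.map residueMap ∘ T) := by
  decide

theorem map_residueMap_comp_T_bijective :
    Function.Bijective (Matrix.SpecialLinearGroup.map residueMap ∘ T) := by
  rw [Fintype.bijective_iff_injective_and_card, card_SL_two_zmod_two, Fintype.card_fin]
  exact ⟨map_residueMap_comp_T_injective, rfl⟩

/-- Every element of `PSL(2, ℤ[i])` is `γ · (image of T_i)` for a unique `i ∈ {0,…,5}` and some
`γ ∈ Γ(1+i)`: the images of `T₀, …, T₅` form a complete system of right coset representatives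
for `Γ(1+i)` in `PSL(2, ℤ[i])`. -/
theorem T_complete_coset_representatives :
    ∀ g : PSL2Zi, ∃! i : Fin 6, ∃ γ ∈ Gamma ⟨1, 1⟩, g = γ * QuotientGroup.mk' PM (T i) := by
  rw [← ker_pslReduction]
  exact existsUnique_exists_mem_ker_eq_mul pslReduction map_residueMap_comp_T_bijective
end

section
/- Define V : ℝ → ℝ by V(ρ) = 4π·∫₀^ρ sinh²(s) ds and r : (0,∞) → ℝ by r(x) = log(coth(x/2)). Suppose t₀ > 0 satisfies V(r(t₀)) = 0.47. Then 16 · (2 · 0.94 · ∫₀^{t₀/2} cosh³(t) dt) > 8π²/3; that is, sixteen disjoint tubular neighbourhoods, each of volume 𝒱′(0.94) = 2·0.94·∫₀^{d₄(0.94)} cosh³(t) dt with d₄(A) = (1/2)·(V∘r)⁻¹(A/2), have total volume exceeding the volume 8π²/3 of an orientable hyperbolic 4-manifold of Euler characteristic 2. -/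
open Real

/-- `V ρ = 4π ∫₀^ρ sinh² s ds`, the volume of a ball of radius `ρ` in hyperbolic 3-space. -/
noncomputable def V (ρ : ℝ) : ℝ := 4 * π * ∫ s in (0 : ℝ)..ρ, Real.sinh s ^ 2

/-- `r x = log (coth (x/2))`. -/
noncomputable def r (x : ℝ) : ℝ := Real.log (Real.cosh (x / 2) / Real.sinh (x / 2))

/-!
Hyperbolic balls are at least as large as Euclidean ones, `V ρ ≥ 4πρ³/3`, and `0.47` is less than
`π/6`, the volume of a Euclidean ball of radius `1/2`; hence `r t₀ ≤ 1/2`. Since `exp (r t)` is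
`coth (t/2)`, this bounds `sinh² (t₀/2)` below by `1/(e - 1)`, which is enough because the tube
volume is a polynomial in `sinh (t₀/2)`: `∫₀^d cosh³ = sinh d + sinh³ d / 3`.
-/

theorem hasDerivAt_sinh_add_sinh_pow_three_div_three (x : ℝ) :
    HasDerivAt (fun t => sinh t + sinh t ^ 3 / 3) (cosh x ^ 3) x := by
  refine ((hasDerivAt_sinh x).add (((hasDerivAt_sinh x).pow 3).div_const 3)).congr_deriv ?_
  push_cast
  linear_combination -cosh x * cosh_sq x

theorem integral_cosh_pow_three (a b : ℝ) :
    ∫ t in a..b, cosh t ^ 3 = (sinh b + sinh b ^ 3 / 3) - (sinh a + sinh a ^ 3 / 3) :=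
  intervalIntegral.integral_eq_sub_of_hasDerivAt
    (fun x _ => hasDerivAt_sinh_add_sinh_pow_three_div_three x)
    ((continuous_cosh.pow 3).intervalIntegrable a b)

theorem pow_three_div_three_le_integral_sinh_sq {ρ : ℝ} (hρ : 0 ≤ ρ) :
    ρ ^ 3 / 3 ≤ ∫ s in (0 : ℝ)..ρ, sinh s ^ 2 :=
  calc
    ρ ^ 3 / 3 = ∫ s in (0 : ℝ)..ρ, s ^ 2 := by rw [integral_pow]; norm_num
    _ ≤ ∫ s in (0 : ℝ)..ρ, sinh s ^ 2 :=
      intervalIntegral.integral_mono_on hρ ((continuous_pow 2).intervalIntegrable 0 ρ)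
        ((continuous_sinh.pow 2).intervalIntegrable 0 ρ)
        fun _ hs => pow_le_pow_left₀ hs.1 (self_le_sinh_iff.2 hs.1) 2

theorem euclidean_ball_volume_le_V {ρ : ℝ} (hρ : 0 ≤ ρ) : 4 / 3 * π * ρ ^ 3 ≤ V ρ :=
  calc
    4 / 3 * π * ρ ^ 3 = 4 * π * (ρ ^ 3 / 3) := by ring
    _ ≤ V ρ :=
      mul_le_mul_of_nonneg_left (pow_three_div_three_le_integral_sinh_sq hρ) (by positivity)

theorem le_of_V_le_euclidean_ball_volume {ρ a : ℝ} (ha : 0 ≤ a) (h : V ρ ≤ 4 / 3 * π * a ^ 3) :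
    ρ ≤ a := by
  obtain hρ | hρ := le_total ρ 0
  · exact hρ.trans ha
  · have hcube : ρ ^ 3 ≤ a ^ 3 :=
      le_of_mul_le_mul_left ((euclidean_ball_volume_le_V hρ).trans h) (by positivity)
    exact le_of_pow_le_pow_left₀ three_ne_zero ha hcube

theorem exp_r {t : ℝ} (ht : 0 < t) : exp (r t) = cosh (t / 2) / sinh (t / 2) :=
  exp_log (div_pos (cosh_pos _) (sinh_pos_iff.2 (half_pos ht)))

theorem sinh_half_sq_eq_inv {t : ℝ} (ht : 0 < t) :
    sinh (t / 2) ^ 2 = (exp (2 * r t) - 1)⁻¹ := by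
  have hs : sinh (t / 2) ≠ 0 := (sinh_pos_iff.2 (half_pos ht)).ne'
  have hexp : exp (2 * r t) = cosh (t / 2) ^ 2 / sinh (t / 2) ^ 2 := by
    rw [← div_pow, ← exp_r ht, ← exp_nat_mul, Nat.cast_two]
  rw [hexp, cosh_sq]
  field_simp
  ring

theorem inv_le_sinh_half_sq_of_r_le {t ρ : ℝ} (ht : 0 < t) (h : r t ≤ ρ) :
    (exp (2 * ρ) - 1)⁻¹ ≤ sinh (t / 2) ^ 2 := by
  have hpos : 0 < exp (2 * r t) - 1 := by
    rw [← inv_pos, ← sinh_half_sq_eq_inv ht]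
    exact pow_pos (sinh_pos_iff.2 (half_pos ht)) 2
  rw [sinh_half_sq_eq_inv ht]
  gcongr

theorem lt_sinh_half_of_V_r_le {t : ℝ} (ht : 0 < t) (h : V (r t) ≤ π / 6) :
    0.76 < sinh (t / 2) := by
  have hr : r t ≤ 1 / 2 := le_of_V_le_euclidean_ball_volume (by norm_num) (by linarith)
  refine lt_of_pow_lt_pow_left₀ 2 (sinh_pos_iff.2 (half_pos ht)).le ?_
  calc
    (0.76 : ℝ) ^ 2 < (2.7182818286 - 1)⁻¹ := by norm_num
    _ ≤ (exp (2 * (1 / 2)) - 1)⁻¹ := by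
      rw [mul_one_div_cancel two_ne_zero]
      have := exp_one_gt_two
      exact inv_anti₀ (by linarith) (by linarith [exp_one_lt_d9])
    _ ≤ sinh (t / 2) ^ 2 := inv_le_sinh_half_sq_of_r_le ht hr

theorem sixteen_tubes_exceed_volume_general {A t : ℝ} (hA : 0.91 ≤ A) (hA' : A ≤ π / 3)
    (ht : 0 < t) (h : V (r t) = A / 2) :
    16 * (2 * A * ∫ x in (0 : ℝ)..(t / 2), cosh x ^ 3) > 8 * π ^ 2 / 3 := by
  have hs : 0.76 < sinh (t / 2) := lt_sinh_half_of_V_r_le ht (by linarith)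
  have hintegral : 0.906 ≤ ∫ x in (0 : ℝ)..(t / 2), cosh x ^ 3 := by
    have hcube : (0.76 : ℝ) ^ 3 ≤ sinh (t / 2) ^ 3 := by gcongr
    rw [integral_cosh_pow_three, sinh_zero]
    linarith
  calc
    8 * π ^ 2 / 3 < 8 * 3.1416 ^ 2 / 3 := by gcongr; exact pi_lt_d4
    _ < 16 * (2 * 0.91 * 0.906) := by norm_num
    _ ≤ 16 * (2 * A * ∫ x in (0 : ℝ)..(t / 2), cosh x ^ 3) := by gcongr

/-- If `t₀ > 0` satisfies `V(r(t₀)) = 0.47` (so that `d₄(0.94) = t₀/2`), then sixteen disjoint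
tubular neighbourhoods, each of volume `𝒱′(0.94) = 2·0.94·∫₀^{t₀/2} cosh³ t dt`, have total
volume exceeding `8π²/3`, the volume of an orientable hyperbolic 4-manifold of Euler
characteristic 2. -/
theorem sixteen_tubes_exceed_volume (t₀ : ℝ) (ht₀ : 0 < t₀) (h : V (r t₀) = 0.47) :
    16 * (2 * 0.94 * ∫ t in (0 : ℝ)..(t₀ / 2), Real.cosh t ^ 3) > 8 * π ^ 2 / 3 :=
  sixteen_tubes_exceed_volume_general (by norm_num) (by linarith [pi_gt_three]) ht₀
    (h.trans (by norm_num))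
end
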